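/- Every block sequence (z_n) of (e_i) admits a normalized block sequence (y_n) of (z_n) (each y_n a norm-one finite linear combination of consecutive z_n's, with y₁ < y₂ < ⋯) which is equivalent to (e_n): there is C ≥ 1 such that (1/C)‖Σ α_i e_i‖ ≤ ‖Σ α_i y_i‖ ≤ C‖Σ α_i e_i‖ for all finitely supported real scalars (α_i). -/

import Mathlib

abbrev c00 : Type := ℕ →₀ ℝ

noncomputable def flog (x : ℝ) : ℝ := Real.logb 2 (x + 1)

noncomputable def supNorm (x : c00) : ℝ := ⨆ i, |x i|

def proj (E : Finset ℕ) (x : c00) : c00 := x.filter (· ∈ E)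

def FLt (A B : Finset ℕ) : Prop := ∀ a ∈ A, ∀ b ∈ B, a < b

def IsNormC00 (N : c00 → ℝ) : Prop :=
  (∀ x, N x = 0 ↔ x = 0) ∧ (∀ x y, N (x + y) ≤ N x + N y) ∧
    ∀ (a : ℝ) (x : c00), N (a • x) = |a| * N x

def schSet (N : c00 → ℝ) (x : c00) : Set ℝ :=
  {s | ∃ n : ℕ, 2 ≤ n ∧ ∃ E : Fin n → Finset ℕ,
    (∀ i j : Fin n, i < j → FLt (E i) (E j)) ∧
    s = (flog n)⁻¹ * ∑ i, N (proj (E i) x)}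

def IsSchlumprechtNorm (N : c00 → ℝ) : Prop :=
  IsNormC00 N ∧ ∀ x : c00, IsLUB (insert (supNorm x) (schSet N x)) (N x)

def IsBlockSeq (x : ℕ → c00) : Prop :=
  (∀ n, x n ≠ 0) ∧ ∀ n, ∀ i ∈ (x n).support, ∀ j ∈ (x (n+1)).support, i < j

def SeqEquiv (N : c00 → ℝ) (u v : ℕ → c00) : Prop :=
  ∃ c : ℝ, 1 ≤ c ∧ ∀ a : ℕ →₀ ℝ,
    (1 / c) * N (a.sum fun i t => t • u i) ≤ N (a.sum fun i t => t • v i) ∧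
    N (a.sum fun i t => t • v i) ≤ c * N (a.sum fun i t => t • u i)


section helpers
open Finset

lemma proj_apply (E : Finset ℕ) (x : c00) (i : ℕ) :
    proj E x i = if i ∈ E then x i else 0 := by
  unfold proj; rw [Finsupp.filter_apply]

lemma proj_add (E : Finset ℕ) (x y : c00) : proj E (x + y) = proj E x + proj E y := by
  ext i; simp only [proj_apply, Finsupp.add_apply]; split_ifs <;> simp

lemma proj_smul (E : Finset ℕ) (a : ℝ) (x : c00) : proj E (a • x) = a • proj E x := by
  ext i; simp only [proj_apply, Finsupp.smul_apply]; split_ifs <;> simp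

lemma proj_zero (E : Finset ℕ) : proj E (0 : c00) = 0 := by
  ext i; simp [proj_apply]

lemma proj_sum {ι : Type*} (E : Finset ℕ) (s : Finset ι) (x : ι → c00) :
    proj E (∑ i ∈ s, x i) = ∑ i ∈ s, proj E (x i) := by
  classical
  induction s using Finset.induction_on with
  | empty => simp [proj_zero]
  | insert a s ha ih => rw [Finset.sum_insert ha, Finset.sum_insert ha, proj_add, ih]

lemma proj_proj (E F : Finset ℕ) (x : c00) : proj E (proj F x) = proj (F ∩ E) x := by
  ext i; simp only [proj_apply, Finset.mem_inter]; split_ifs <;> simp_all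

lemma proj_eq_self {E : Finset ℕ} {x : c00} (h : x.support ⊆ E) : proj E x = x := by
  ext i
  rw [proj_apply]
  split_ifs with hi
  · rfl
  · by_contra h2
    exact hi (h (Finsupp.mem_support_iff.2 (fun h3 => h2 h3.symm)))

lemma proj_eq_zero {E : Finset ℕ} {x : c00} (h : ∀ t ∈ x.support, t ∉ E) : proj E x = 0 := by
  ext i
  rw [proj_apply]
  split_ifs with hi
  · by_contra h2
    exact h i (Finsupp.mem_support_iff.2 h2) hi
  · rfl

lemma support_proj_subset (E : Finset ℕ) (x : c00) : (proj E x).support ⊆ x.support := by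
  intro i hi
  rw [Finsupp.mem_support_iff, proj_apply] at hi
  rw [Finsupp.mem_support_iff]
  split_ifs at hi
  · exact hi
  · exact absurd rfl hi

lemma proj_eq_of_card {E : Finset ℕ} {x : c00}
    (h : ¬ (proj E x).support.card < x.support.card) : x.support ⊆ E := by
  have h1 := Finset.eq_of_subset_of_card_le (support_proj_subset E x) (not_lt.1 h)
  intro i hi
  rw [← h1, Finsupp.mem_support_iff, proj_apply] at hi
  by_contra h2
  simp [h2] at hi

lemma flog_le {m n : ℕ} (h : m ≤ n) : flog m ≤ flog n := by
  unfold flog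
  have : (m : ℝ) ≤ n := by exact_mod_cast h
  exact Real.logb_le_logb_of_le (by norm_num) (by positivity) (by linarith)

lemma flog_one : flog (1 : ℕ) = 1 := by
  unfold flog
  norm_num

lemma one_le_flog {n : ℕ} (h : 1 ≤ n) : 1 ≤ flog n := by
  rw [← flog_one]; exact flog_le h

lemma one_lt_flog_two : 1 < flog (2 : ℕ) := by
  rw [← flog_one]
  unfold flog
  exact Real.logb_lt_logb (by norm_num) (by norm_num) (by norm_num)

lemma flog_two_mul {n : ℕ} (_h : 1 ≤ n) : flog ((2 * n : ℕ)) ≤ flog n + 1 := by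
  have : flog n + 1 = Real.logb 2 (((n : ℝ) + 1) * 2) := by
    rw [Real.logb_mul (by positivity) (by norm_num)]
    simp [flog]
  rw [this]
  unfold flog
  apply Real.logb_le_logb_of_le (by norm_num) (by positivity)
  push_cast; linarith

lemma flog_two_pow (m : ℕ) : (m : ℝ) ≤ flog ((2 ^ m : ℕ)) := by
  unfold flog
  rw [Real.le_logb_iff_rpow_le (by norm_num) (by positivity)]
  push_cast
  rw [Real.rpow_natCast]
  linarith

lemma abs_le_supNorm (x : c00) (i : ℕ) : |x i| ≤ supNorm x := by
  unfold supNorm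
  apply le_ciSup (f := fun i => |x i|)
  refine ⟨∑ j ∈ x.support, |x j|, ?_⟩
  rintro _ ⟨j, rfl⟩
  by_cases hj : j ∈ x.support
  · exact Finset.single_le_sum (f := fun j => |x j|) (fun _ _ => abs_nonneg _) hj
  · rw [Finsupp.notMem_support_iff] at hj
    simp only [hj, abs_zero]
    exact Finset.sum_nonneg (fun _ _ => abs_nonneg _)

lemma supNorm_le {x : c00} {R : ℝ} (h : ∀ i, |x i| ≤ R) : supNorm x ≤ R := ciSup_le h

section norm
variable {N : c00 → ℝ} (hN : IsSchlumprechtNorm N)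
include hN

lemma N_zero : N 0 = 0 := (hN.1.1 0).2 rfl
lemma N_add (x y : c00) : N (x + y) ≤ N x + N y := hN.1.2.1 x y
lemma N_smul (a : ℝ) (x : c00) : N (a • x) = |a| * N x := hN.1.2.2 a x
lemma abs_le_N (x : c00) (i : ℕ) : |x i| ≤ N x :=
  (abs_le_supNorm x i).trans ((hN.2 x).1 (Set.mem_insert _ _))
lemma N_nonneg (x : c00) : 0 ≤ N x := (abs_nonneg _).trans (abs_le_N hN x 0)
lemma N_pos {x : c00} (hx : x ≠ 0) : 0 < N x :=
  lt_of_le_of_ne (N_nonneg hN x) (fun h => hx ((hN.1.1 x).1 h.symm))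

lemma N_sum {ι : Type*} (s : Finset ι) (x : ι → c00) : N (∑ i ∈ s, x i) ≤ ∑ i ∈ s, N (x i) := by
  classical
  induction s using Finset.induction_on with
  | empty => simp [N_zero hN]
  | insert a s ha ih =>
    rw [Finset.sum_insert ha, Finset.sum_insert ha]
    linarith [N_add hN (x a) (∑ i ∈ s, x i)]

lemma N_sum_le_two (x : c00) {n : ℕ} (hn : 2 ≤ n) (E : ℕ → Finset ℕ)
    (hE : ∀ p q, p < q → q < n → FLt (E p) (E q)) :
    ∑ p ∈ range n, N (proj (E p) x) ≤ flog n * N x := by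
  have h1 : 0 < flog n := lt_of_lt_of_le one_pos (one_le_flog (by omega))
  have h2 : (flog n)⁻¹ * ∑ i : Fin n, N (proj (E i) x) ≤ N x := by
    apply (hN.2 x).1
    right
    exact ⟨n, hn, fun i => E i, fun i j hij => hE _ _ hij j.2, rfl⟩
  rw [Finset.sum_range (f := fun p => N (proj (E p) x))]
  rwa [inv_mul_le_iff₀ h1] at h2

lemma N_le_core (x : c00) {R : ℝ} (hR : 0 ≤ R) (hsup : ∀ i, |x i| ≤ R)
    (hstep : ∀ n, 2 ≤ n → ∀ E : ℕ → Finset ℕ, (∀ p q, p < q → q < n → FLt (E p) (E q)) →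
      ∑ p ∈ range n, N (proj (E p) x) ≤ flog n * R ∨ ∑ p ∈ range n, N (proj (E p) x) ≤ N x) :
    N x ≤ R := by
  have h0 := one_lt_flog_two
  have key : N x ≤ max R ((flog (2 : ℕ))⁻¹ * N x) := by
    apply (hN.2 x).2
    rintro s (rfl | ⟨n, hn, E, hE, rfl⟩)
    · exact (supNorm_le hsup).trans (le_max_left _ _)
    · have h1 : 0 < flog n := lt_of_lt_of_le one_pos (one_le_flog (by omega))
      have h3 := flog_le hn
      have hs := hstep n hn (fun j => if h : j < n then E ⟨j, h⟩ else ∅) (by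
        intro p q hpq hq
        have hp : p < n := by omega
        simp only [hp, hq, dif_pos]
        exact hE _ _ hpq)
      rw [Finset.sum_range] at hs
      simp only [Fin.is_lt, dif_pos, Fin.eta] at hs
      rcases hs with hs | hs
      · apply le_max_of_le_left
        rwa [inv_mul_le_iff₀ h1]
      · apply le_max_of_le_right
        apply mul_le_mul _ hs (Finset.sum_nonneg fun _ _ => N_nonneg hN _) (by positivity)
        exact inv_anti₀ (by linarith) h3
  rcases le_max_iff.1 key with h | h
  · exact h
  · have h4 : (flog (2 : ℕ))⁻¹ < 1 := inv_lt_one_of_one_lt₀ h0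
    have := N_nonneg hN x
    nlinarith

lemma sum_proj_of_full (x : c00) {n : ℕ} (E : ℕ → Finset ℕ)
    (hE : ∀ p q, p < q → q < n → FLt (E p) (E q)) {j : ℕ} (hj : j < n)
    (h : x.support ⊆ E j) : ∑ p ∈ range n, N (proj (E p) x) = N x := by
  rw [Finset.sum_eq_single j]
  · rw [proj_eq_self h]
  · intro p hp hpj
    rw [proj_eq_zero, N_zero hN]
    intro t ht htp
    rcases lt_or_gt_of_ne hpj with h1 | h1
    · exact lt_irrefl _ (hE p j h1 hj t htp t (h ht))
    · exact lt_irrefl _ (hE j p h1 (mem_range.1 hp) t (h ht) t htp)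
  · intro h1; exact absurd (mem_range.2 hj) h1

lemma N_le (x : c00) {R : ℝ} (hR : 0 ≤ R) (hsup : ∀ i, |x i| ≤ R)
    (hstep : ∀ n, 2 ≤ n → ∀ E : ℕ → Finset ℕ, (∀ p q, p < q → q < n → FLt (E p) (E q)) →
      (∀ p < n, (proj (E p) x).support.card < x.support.card) →
      ∑ p ∈ range n, N (proj (E p) x) ≤ flog n * R) :
    N x ≤ R := by
  apply N_le_core hN x hR hsup
  intro n hn E hE
  by_cases h : ∀ p < n, (proj (E p) x).support.card < x.support.card
  · exact Or.inl (hstep n hn E hE h)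
  · right
    push Not at h
    obtain ⟨j, hj, h⟩ := h
    exact (sum_proj_of_full hN x E hE hj (proj_eq_of_card (not_lt.2 h))).le

lemma N_mono_aux (m : ℕ) : ∀ x y : c00, x.support.card ≤ m → (∀ i, |x i| ≤ |y i|) → N x ≤ N y := by
  induction m with
  | zero =>
    intro x y hx _
    have : x = 0 := by simpa using hx
    rw [this, N_zero hN]; exact N_nonneg hN y
  | succ m ih =>
    intro x y hx hxy
    apply N_le hN x (N_nonneg hN y) (fun i => (hxy i).trans (abs_le_N hN y i))
    intro n hn E hE hc
    refine le_trans (Finset.sum_le_sum fun p hp => ?_) (N_sum_le_two hN y hn E hE)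
    apply ih
    · have := hc p (mem_range.1 hp); omega
    · intro i
      simp only [proj_apply]
      split_ifs
      · exact hxy i
      · simp

lemma N_mono {x y : c00} (h : ∀ i, |x i| ≤ |y i|) : N x ≤ N y := N_mono_aux hN _ x y le_rfl h

lemma N_proj_le (E : Finset ℕ) (x : c00) : N (proj E x) ≤ N x := by
  apply N_mono hN
  intro i; rw [proj_apply]; split_ifs <;> simp

lemma N_sum_le (x : c00) {n : ℕ} (hn : 1 ≤ n) (E : ℕ → Finset ℕ)
    (hE : ∀ p q, p < q → q < n → FLt (E p) (E q)) :
    ∑ p ∈ range n, N (proj (E p) x) ≤ flog n * N x := by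
  rcases Nat.lt_or_ge n 2 with h | h
  · obtain rfl : n = 1 := by omega
    rw [flog_one]
    simpa using N_proj_le hN (E 0) x
  · exact N_sum_le_two hN x h E hE

lemma N_single (i : ℕ) (a : ℝ) : N (Finsupp.single i a) = |a| := by
  apply le_antisymm
  · apply N_le hN _ (abs_nonneg a)
    · intro j
      rw [Finsupp.single_apply]; split_ifs <;> simp
    · intro n hn E hE hc
      rw [Finset.sum_eq_zero]
      · exact mul_nonneg (zero_le_one.trans (one_le_flog (by omega))) (abs_nonneg a)
      · intro p hp
        have h1 := hc p (mem_range.1 hp)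
        have h2 : (Finsupp.single i a).support.card ≤ 1 := by
          simpa using Finset.card_le_card (Finsupp.support_single_subset (a := i) (b := a))
        have h3 : (proj (E p) (Finsupp.single i a)).support.card = 0 := by omega
        have : proj (E p) (Finsupp.single i a) = 0 := by simpa using h3
        rw [this, N_zero hN]
  · simpa using abs_le_N hN (Finsupp.single i a) i

lemma N_le_l1 (x : c00) : N x ≤ ∑ t ∈ x.support, |x t| := by
  conv_lhs => rw [← Finsupp.sum_single x]
  unfold Finsupp.sum
  refine (N_sum hN _ _).trans (le_of_eq ?_)
  exact Finset.sum_congr rfl fun i _ => N_single hN i _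

/-- intervals determined by cuts -/
lemma N_le_cuts (x : c00) {R : ℝ} (B : ℕ) (hR : 0 ≤ R) (hsup : ∀ i, |x i| ≤ R)
    (hstep : ∀ n, 2 ≤ n → ∀ c : ℕ → ℕ, Monotone c → c 0 = 0 → B ≤ c n →
      (∀ p < n, (proj (Ico (c p) (c (p+1))) x).support.card < x.support.card) →
      ∑ p ∈ range n, N (proj (Ico (c p) (c (p+1))) x) ≤ flog n * R) :
    N x ≤ R := by
  apply N_le_core hN x hR hsup
  intro n hn E hE
  set S : ℕ → ℕ := fun j => (range j).sup (fun i => (E i).sup (· + 1)) with hS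
  have hSm : Monotone S := by
    intro i j hij
    exact Finset.sup_mono (by simpa using hij)
  set T : ℕ := max (S n) (max B (x.support.sup (· + 1))) with hT
  set c : ℕ → ℕ := fun j => if n ≤ j then T else S j with hc
  have hcm : Monotone c := by
    intro i j hij
    simp only [hc]
    split_ifs with h1 h2 h2
    · exact le_rfl
    · omega
    · exact (hSm (by omega : i ≤ n)).trans (le_max_left _ _)
    · exact hSm hij
  have hc0 : c 0 = 0 := by
    have : ¬ n ≤ 0 := by omega
    simp [hc, this, hS]
  have hcn : B ≤ c n := by
    simp only [hc, le_refl, if_true, hT]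
    exact (le_max_left _ _).trans (le_max_right _ _)
  have hsub : ∀ p < n, ∀ t ∈ x.support, t ∈ E p → t ∈ Ico (c p) (c (p+1)) := by
    intro p hp t ht htE
    rw [Finset.mem_Ico]
    constructor
    · have : ¬ n ≤ p := by omega
      simp only [hc, this, if_false, hS]
      apply Finset.sup_le
      intro i hi
      apply Finset.sup_le
      intro s hs
      exact hE i p (mem_range.1 hi) hp s hs t htE
    · simp only [hc]
      split_ifs with h1
      · have : t + 1 ≤ x.support.sup (· + 1) := Finset.le_sup (f := (· + 1)) ht
        have h2 : x.support.sup (· + 1) ≤ T := (le_max_right _ _).trans (le_max_right _ _)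
        omega
      · have h3 : t + 1 ≤ (E p).sup (· + 1) := Finset.le_sup (f := (· + 1)) htE
        have h4 : (E p).sup (· + 1) ≤ S (p + 1) :=
          Finset.le_sup (f := fun i => (E i).sup (· + 1)) (mem_range.2 (Nat.lt_succ_self p))
        omega
  have hle : ∑ p ∈ range n, N (proj (E p) x) ≤ ∑ p ∈ range n, N (proj (Ico (c p) (c (p+1))) x) := by
    apply Finset.sum_le_sum
    intro p hp
    apply N_mono hN
    intro i
    simp only [proj_apply]
    by_cases h1 : i ∈ E p
    · by_cases h2 : i ∈ x.support
      · simp [h1, hsub p (mem_range.1 hp) i h2 h1, -Finset.mem_Ico]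
      · rw [Finsupp.notMem_support_iff] at h2
        simp [h2]
    · simp [h1]
  by_cases h : ∀ p < n, (proj (Ico (c p) (c (p+1))) x).support.card < x.support.card
  · exact Or.inl (hle.trans (hstep n hn c hcm hc0 hcn h))
  · right
    push Not at h
    obtain ⟨j, hj, h⟩ := h
    refine hle.trans (le_of_eq ?_)
    apply sum_proj_of_full hN x (fun p => Ico (c p) (c (p+1))) _ hj (proj_eq_of_card (not_lt.2 h))
    intro p q hpq _ a ha b hb
    rw [Finset.mem_Ico] at ha hb
    exact lt_of_lt_of_le ha.2 ((hcm hpq).trans hb.1)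

end norm
section norm2
variable {N : c00 → ℝ} (hN : IsSchlumprechtNorm N)
include hN

lemma exists_norming (v : c00) : ∃ φ : c00 →ₗ[ℝ] ℝ, (∀ x, φ x ≤ N x) ∧ φ v = N v := by
  by_cases hv : v = 0
  · refine ⟨0, fun x => by simpa using N_nonneg hN x, ?_⟩
    rw [hv, N_zero hN]; simp
  · obtain ⟨g, hg1, hg2⟩ := exists_extension_of_le_sublinear
      (LinearPMap.mkSpanSingleton (K := ℝ) v (N v) hv) N
      (fun c hc x => by rw [N_smul hN, abs_of_pos hc]) (N_add hN) (by
        rintro ⟨x, hx⟩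
        obtain ⟨t, rfl⟩ := Submodule.mem_span_singleton.1 hx
        have h3 := LinearPMap.mkSpanSingleton'_apply (R := ℝ) v (N v)
          (fun c hc => (smul_eq_zero.1 hc).elim (fun hc => by simp [hc]) (fun h => absurd h hv)) t hx
        refine (le_of_eq h3).trans ?_
        simp only [N_smul hN, smul_eq_mul, RingHom.id_apply]
        exact mul_le_mul_of_nonneg_right (le_abs_self t) (N_nonneg hN v))
    refine ⟨g, hg2, ?_⟩
    have := hg1 ⟨v, Submodule.mem_span_singleton_self v⟩
    rw [this]
    exact LinearPMap.mkSpanSingleton_apply ℝ ℝ hv (N v)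

omit hN in
lemma lin_eq_sum (φ : c00 →ₗ[ℝ] ℝ) (x : c00) (U : Finset ℕ) (h : x.support ⊆ U) :
    φ x = ∑ i ∈ U, x i * φ (Finsupp.single i 1) := by
  conv_lhs => rw [← Finsupp.sum_single x]
  rw [Finsupp.sum_of_support_subset x h _ (by simp), map_sum]
  apply Finset.sum_congr rfl
  intro i _
  rw [← smul_eq_mul, ← map_smul, Finsupp.smul_single, smul_eq_mul, mul_one]

lemma conv (m : ℕ) (v : ℕ → c00) (hnn : ∀ p i, 0 ≤ v p i)
    (hsucc : ∀ p q, p < q → q < m → ∀ i ∈ (v p).support, ∀ i' ∈ (v q).support, i ≤ i')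
    (b : c00) (hb : ∀ i, ∑ p ∈ range m, v p i ≤ b i) :
    ∃ I : ℕ → Finset ℕ, (∀ p q, p < q → q < m → FLt (I p) (I q)) ∧
      (∀ p < m, ∀ i ∈ I p, i ∈ (v p).support) ∧
      ∑ p ∈ range m, N (v p) ≤ ∑ p ∈ range m, N (proj (I p) b) := by
  classical
  choose φ hφ1 hφ2 using exists_norming hN
  set U : Finset ℕ := (range m).biUnion (fun p => (v p).support) with hU
  have hg : ∀ i, ∃ p, i ∈ U → p < m ∧ v p i ≠ 0 ∧ ∀ q < m, v q i ≠ 0 →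
      φ (v q) (Finsupp.single i 1) ≤ φ (v p) (Finsupp.single i 1) := by
    intro i
    by_cases hi : i ∈ U
    · have hne : ((range m).filter (fun p => v p i ≠ 0)).Nonempty := by
        rw [hU, Finset.mem_biUnion] at hi
        obtain ⟨p, hp, hpi⟩ := hi
        exact ⟨p, Finset.mem_filter.2 ⟨hp, Finsupp.mem_support_iff.1 hpi⟩⟩
      obtain ⟨p, hp, hmax⟩ := Finset.exists_max_image _
        (fun q => φ (v q) (Finsupp.single i 1)) hne
      refine ⟨p, fun _ => ?_⟩
      rw [Finset.mem_filter, mem_range] at hp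
      refine ⟨hp.1, hp.2, fun q hq hqi => hmax q ?_⟩
      exact Finset.mem_filter.2 ⟨mem_range.2 hq, hqi⟩
    · exact ⟨0, fun h => absurd h hi⟩
  choose g hg using hg
  set I : ℕ → Finset ℕ := fun p => U.filter (fun i => g i = p) with hI
  have hIs : ∀ p < m, ∀ i ∈ I p, i ∈ (v p).support := by
    intro p hp i hi
    rw [hI, Finset.mem_filter] at hi
    rw [Finsupp.mem_support_iff, ← hi.2]
    exact (hg i hi.1).2.1
  refine ⟨I, ?_, hIs, ?_⟩
  · intro p q hpq hq i hi i' hi'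
    have h1 := hsucc p q hpq hq i (hIs p (by omega) i hi) i' (hIs q hq i' hi')
    rcases lt_or_eq_of_le h1 with h2 | h2
    · exact h2
    · exfalso
      subst h2
      rw [hI, Finset.mem_filter] at hi hi'
      omega
  · set V : c00 := ∑ p ∈ range m, v p with hV
    have hVi : ∀ i, V i = ∑ p ∈ range m, v p i := by
      intro i; rw [hV, Finsupp.finsetSum_apply]
    have hbV : ∀ p, N (proj (I p) V) ≤ N (proj (I p) b) := by
      intro p
      apply N_mono hN
      intro i
      simp only [proj_apply]
      split_ifs
      · have h0 : 0 ≤ V i := by rw [hVi]; exact Finset.sum_nonneg fun q _ => hnn q i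
        have h1 : V i ≤ b i := by rw [hVi]; exact hb i
        rw [abs_of_nonneg h0, abs_of_nonneg (h0.trans h1)]; exact h1
      · exact le_rfl
    have e1 : ∑ p ∈ range m, N (v p) =
        ∑ i ∈ U, ∑ p ∈ range m, v p i * φ (v p) (Finsupp.single i 1) := by
      rw [Finset.sum_comm]
      apply Finset.sum_congr rfl
      intro p hp
      rw [← hφ2 (v p)]
      conv_lhs => rw [lin_eq_sum (φ (v p)) (v p) U (Finset.subset_biUnion_of_mem (fun p => (v p).support) hp)]
    have e2 : ∑ p ∈ range m, φ (v p) (proj (I p) V) =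
        ∑ i ∈ U, V i * φ (v (g i)) (Finsupp.single i 1) := by
      have : ∀ p ∈ range m, φ (v p) (proj (I p) V) =
          ∑ i ∈ U, if g i = p then V i * φ (v p) (Finsupp.single i 1) else 0 := by
        intro p hp
        rw [lin_eq_sum (φ (v p)) (proj (I p) V) U]
        · apply Finset.sum_congr rfl
          intro i hi
          rw [proj_apply]
          by_cases h : g i = p
          · simp [hI, h, hi]
          · simp [hI, h]
        · intro i hi
          rw [Finsupp.mem_support_iff, proj_apply] at hi
          by_contra h
          apply hi
          rw [if_neg]
          intro h2
          exact h (Finset.mem_filter.1 h2).1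
      rw [Finset.sum_congr rfl this, Finset.sum_comm]
      apply Finset.sum_congr rfl
      intro i hi
      rw [Finset.sum_ite_eq, if_pos (mem_range.2 (hg i hi).1)]
    calc ∑ p ∈ range m, N (v p) = _ := e1
      _ ≤ ∑ i ∈ U, V i * φ (v (g i)) (Finsupp.single i 1) := by
        apply Finset.sum_le_sum
        intro i hi
        rw [hVi, Finset.sum_mul]
        apply Finset.sum_le_sum
        intro p hp
        by_cases h : v p i = 0
        · simp [h]
        · exact mul_le_mul_of_nonneg_left ((hg i hi).2.2 p (mem_range.1 hp) h) (hnn p i)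
      _ = _ := e2.symm
      _ ≤ ∑ p ∈ range m, N (proj (I p) b) :=
        Finset.sum_le_sum fun p _ => (hφ1 _ _).trans (hbV p)

end norm2

/-- the two-piece norm -/
noncomputable def Phi (N : c00 → ℝ) (M : ℕ) (b : c00) : ℝ :=
  ⨆ c : Fin (M + 1), (N (proj (range c) b) + N (proj (Ico (c : ℕ) M) b))

lemma le_Phi (N : c00 → ℝ) (M : ℕ) (b : c00) {c : ℕ} (hc : c ≤ M) :
    N (proj (range c) b) + N (proj (Ico c M) b) ≤ Phi N M b :=
  le_ciSup (f := fun c : Fin (M + 1) => N (proj (range c) b) + N (proj (Ico (c : ℕ) M) b))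
    (Set.finite_range _).bddAbove ⟨c, Nat.lt_succ_of_le hc⟩

lemma Phi_eq (N : c00 → ℝ) (M : ℕ) (b : c00) :
    ∃ c, c ≤ M ∧ Phi N M b = N (proj (range c) b) + N (proj (Ico c M) b) := by
  obtain ⟨c, hc⟩ := exists_eq_ciSup_of_finite
    (f := fun c : Fin (M + 1) => N (proj (range c) b) + N (proj (Ico (c : ℕ) M) b))
  exact ⟨c, Nat.lt_succ_iff.1 c.2, hc.symm⟩

lemma sum_range_two_mul (F : ℕ → ℝ) (n : ℕ) :
    ∑ p ∈ range (2 * n), F p = ∑ j ∈ range n, (F (2 * j) + F (2 * j + 1)) := by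
  induction n with
  | zero => simp
  | succ n ih =>
    rw [Nat.mul_succ, Finset.sum_range_succ, Finset.sum_range_succ, Finset.sum_range_succ, ih]
    ring

section norm3
variable {N : c00 → ℝ} (hN : IsSchlumprechtNorm N)
include hN

lemma Phi_nonneg (M : ℕ) (b : c00) : 0 ≤ Phi N M b := by
  have := le_Phi N M b (Nat.zero_le M)
  linarith [N_nonneg hN (proj (range 0) b), N_nonneg hN (proj (Ico 0 M) b)]

lemma Phi_le (M : ℕ) (b : c00) : Phi N M b ≤ 2 * N b := by
  obtain ⟨c, _, h⟩ := Phi_eq N M b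
  linarith [N_proj_le hN (range c) b, N_proj_le hN (Ico c M) b]

lemma Phi_split (M n : ℕ) (b : ℕ → c00) (hnn : ∀ j i, 0 ≤ b j i)
    (hsucc : ∀ p q, p < q → q < n → ∀ i ∈ (b p).support, ∀ i' ∈ (b q).support, i ≤ i')
    (B : c00) (hB : ∀ i, ∑ j ∈ range n, b j i ≤ B i) :
    ∃ I : ℕ → Finset ℕ, (∀ p q, p < q → q < 2 * n → FLt (I p) (I q)) ∧
      (∀ p < 2 * n, ∀ i ∈ I p, i < M) ∧
      ∑ j ∈ range n, Phi N M (b j) ≤ ∑ p ∈ range (2 * n), N (proj (I p) B) := by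
  choose c hcM hc using fun j => Phi_eq N M (b j)
  set v : ℕ → c00 := fun p => if p % 2 = 0 then proj (range (c (p / 2))) (b (p / 2))
    else proj (Ico (c (p / 2)) M) (b (p / 2)) with hv
  have hve : ∀ j, v (2 * j) = proj (range (c j)) (b j) := by
    intro j
    have h1 : (2 * j) % 2 = 0 := by omega
    have h2 : 2 * j / 2 = j := by omega
    simp only [hv, h1, h2, if_true]
  have hvo : ∀ j, v (2 * j + 1) = proj (Ico (c j) M) (b j) := by
    intro j
    have h1 : (2 * j + 1) % 2 ≠ 0 := by omega
    have h2 : (2 * j + 1) / 2 = j := by omega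
    simp only [hv, h1, h2, if_false]
  have hvs : ∀ p i, i ∈ (v p).support → i ∈ (b (p / 2)).support ∧ i < M ∧
      (p % 2 = 0 → i < c (p / 2)) ∧ (p % 2 = 1 → c (p / 2) ≤ i) := by
    intro p i hi
    rw [Finsupp.mem_support_iff] at hi ⊢
    have hcm := hcM (p / 2)
    simp only [hv] at hi
    split_ifs at hi with h
    · rw [proj_apply] at hi
      split_ifs at hi with h2
      · rw [mem_range] at h2
        exact ⟨hi, by omega, fun _ => h2, fun h3 => by omega⟩
      · exact absurd rfl hi
    · rw [proj_apply] at hi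
      split_ifs at hi with h2
      · rw [Finset.mem_Ico] at h2
        exact ⟨hi, by omega, fun h3 => by omega, fun _ => h2.1⟩
      · exact absurd rfl hi
  obtain ⟨I, hI1, hI2, hI3⟩ := conv hN (2 * n) v (by
      intro p i
      simp only [hv]
      split_ifs <;> rw [proj_apply] <;> split_ifs <;> first | exact hnn _ _ | exact le_rfl)
    (by
      intro p q hpq hq i hi i' hi'
      obtain ⟨h1, _, h2, h3⟩ := hvs p i hi
      obtain ⟨h1', _, h2', h3'⟩ := hvs q i' hi'
      by_cases he : p / 2 = q / 2
      · rw [← he] at h3'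
        have := h2 (by omega)
        have := h3' (by omega)
        omega
      · exact hsucc _ _ (by omega) (by omega) i h1 i' h1')
    B (by
      intro i
      refine le_trans ?_ (hB i)
      rw [sum_range_two_mul (fun p => v p i)]
      apply Finset.sum_le_sum
      intro j _
      have := hnn j i
      simp only [hve, hvo, proj_apply, mem_range, Finset.mem_Ico]
      split_ifs <;> first | omega | linarith)
  refine ⟨I, hI1, fun p hp i hi => (hvs p i (hI2 p hp i hi)).2.1, ?_⟩
  refine le_trans (le_of_eq ?_) hI3
  rw [sum_range_two_mul (fun p => N (v p))]
  exact Finset.sum_congr rfl fun j _ => by rw [hc, hve, hvo]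

lemma Phi_bad (M n : ℕ) (hn : 1 ≤ n) (b : ℕ → c00) (hnn : ∀ j i, 0 ≤ b j i)
    (hsucc : ∀ p q, p < q → q < n → ∀ i ∈ (b p).support, ∀ i' ∈ (b q).support, i ≤ i')
    (B : c00) (hB : ∀ i, ∑ j ∈ range n, b j i ≤ B i) :
    ∑ j ∈ range n, Phi N M (b j) ≤ (flog n + 1) * N B := by
  obtain ⟨I, h1, _, h3⟩ := Phi_split hN M n b hnn hsucc B hB
  refine h3.trans ((N_sum_le hN B (by omega) I h1).trans ?_)
  exact mul_le_mul_of_nonneg_right (flog_two_mul hn) (N_nonneg hN B)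

lemma Phi_good (M n : ℕ) (hn : 1 ≤ n) (b : ℕ → c00) (hnn : ∀ j i, 0 ≤ b j i)
    (hsucc : ∀ p q, p < q → q < n → ∀ i ∈ (b p).support, ∀ i' ∈ (b q).support, i ≤ i')
    (B : c00) (hB : ∀ i, ∑ j ∈ range n, b j i ≤ B i) :
    ∑ j ∈ range n, Phi N M (b j) ≤ flog n * Phi N M B := by
  obtain ⟨I, h1, h2, h3⟩ := Phi_split hN M n b hnn hsucc B hB
  refine h3.trans ?_
  set U1 : Finset ℕ := (range n).biUnion I with hU1
  set c : ℕ := U1.sup (· + 1) with hc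
  have hcM : c ≤ M := by
    apply Finset.sup_le
    intro i hi
    rw [hU1, Finset.mem_biUnion] at hi
    obtain ⟨p, hp, hpi⟩ := hi
    exact h2 p (by have := mem_range.1 hp; omega) i hpi
  have hlt : ∀ p < n, ∀ i ∈ I p, i < c := by
    intro p hp i hi
    exact Finset.le_sup (f := (· + 1)) (Finset.mem_biUnion.2 ⟨p, mem_range.2 hp, hi⟩)
  have hge : ∀ p < n, ∀ i ∈ I (n + p), c ≤ i := by
    intro p hp i hi
    apply Finset.sup_le
    intro s hs
    rw [hU1, Finset.mem_biUnion] at hs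
    obtain ⟨q, hq, hqs⟩ := hs
    have := mem_range.1 hq
    exact h1 q (n + p) (by omega) (by omega) s hqs i hi
  have e : 2 * n = n + n := by ring
  rw [e, Finset.sum_range_add]
  have a1 : ∑ p ∈ range n, N (proj (I p) B) ≤ flog n * N (proj (range c) B) := by
    refine le_trans (le_of_eq ?_) (N_sum_le hN _ hn I (fun p q h h' => h1 p q h (by omega)))
    apply Finset.sum_congr rfl
    intro p hp
    rw [proj_proj, Finset.inter_eq_right.2]
    intro i hi
    exact mem_range.2 (hlt p (mem_range.1 hp) i hi)
  have a2 : ∑ p ∈ range n, N (proj (I (n + p)) B) ≤ flog n * N (proj (Ico c M) B) := by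
    refine le_trans (le_of_eq ?_) (N_sum_le hN _ hn (fun p => I (n + p))
      (fun p q h h' => h1 _ _ (by omega) (by omega)))
    apply Finset.sum_congr rfl
    intro p hp
    have := mem_range.1 hp
    rw [proj_proj, Finset.inter_eq_right.2]
    intro i hi
    exact Finset.mem_Ico.2 ⟨hge p this i hi, h2 (n + p) (by omega) i hi⟩
  have a3 := le_Phi N M B hcM
  have a4 : 0 ≤ flog n := zero_le_one.trans (one_le_flog hn)
  nlinarith [mul_le_mul_of_nonneg_left a3 a4]

end norm3
/-- auxiliary counting function controlling the error of splitting averages -/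
noncomputable def om (ν : ℕ) (s : ℝ) : ℝ :=
  ⨅ d : ℕ, (((flog (2 : ℕ))⁻¹) ^ d * s + ((2 * (ν : ℝ)) ^ d - 1))

lemma theta_pos : 0 < (flog (2 : ℕ))⁻¹ := inv_pos.2 (zero_lt_one.trans one_lt_flog_two)
lemma theta_lt_one : (flog (2 : ℕ))⁻¹ < 1 := inv_lt_one_of_one_lt₀ one_lt_flog_two

lemma om_term_nonneg {ν : ℕ} (hν : 1 ≤ ν) {s : ℝ} (hs : 0 ≤ s) (d : ℕ) :
    0 ≤ ((flog (2 : ℕ))⁻¹) ^ d * s + ((2 * (ν : ℝ)) ^ d - 1) := by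
  have h1 : (1 : ℝ) ≤ ν := by exact_mod_cast hν
  have h2 : 1 ≤ (2 * (ν : ℝ)) ^ d := one_le_pow₀ (by linarith)
  have h3 : 0 ≤ ((flog (2 : ℕ))⁻¹) ^ d * s := mul_nonneg (pow_nonneg theta_pos.le d) hs
  linarith

lemma om_le {ν : ℕ} (hν : 1 ≤ ν) {s : ℝ} (hs : 0 ≤ s) (d : ℕ) :
    om ν s ≤ ((flog (2 : ℕ))⁻¹) ^ d * s + ((2 * (ν : ℝ)) ^ d - 1) := by
  apply ciInf_le (f := fun d : ℕ => ((flog (2 : ℕ))⁻¹) ^ d * s + ((2 * (ν : ℝ)) ^ d - 1))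
  exact ⟨0, by rintro _ ⟨d, rfl⟩; exact om_term_nonneg hν hs d⟩

lemma om_nonneg {ν : ℕ} (hν : 1 ≤ ν) {s : ℝ} (hs : 0 ≤ s) : 0 ≤ om ν s :=
  le_ciInf (om_term_nonneg hν hs)

lemma om_step {ν n : ℕ} (hn : 2 ≤ n) (hν : n ≤ ν) (s : ℝ) (t : ℕ → ℝ) (p : ℝ)
    (ht : ∀ j, 0 ≤ t j) (hp0 : 0 ≤ p) (hp : p ≤ n) (hs : ∑ j ∈ range n, t j + p ≤ s) :
    (flog n)⁻¹ * ∑ j ∈ range n, om ν (t j) + p ≤ om ν s := by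
  have hν1 : 1 ≤ ν := by omega
  have hf1 : 1 ≤ flog n := one_le_flog (by omega)
  have hf2 : (flog n)⁻¹ ≤ (flog (2 : ℕ))⁻¹ :=
    inv_anti₀ (zero_lt_one.trans one_lt_flog_two) (flog_le hn)
  have hf0 : 0 ≤ (flog n)⁻¹ := inv_nonneg.2 (by linarith)
  have hf3 : (flog n)⁻¹ ≤ 1 := inv_le_one_of_one_le₀ hf1
  have ht0 : 0 ≤ ∑ j ∈ range n, t j := Finset.sum_nonneg fun j _ => ht j
  apply le_ciInf
  intro d
  cases d with
  | zero =>
    have : ∑ j ∈ range n, om ν (t j) ≤ ∑ j ∈ range n, t j := by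
      apply Finset.sum_le_sum
      intro j _
      have := om_le hν1 (ht j) 0
      simpa using this
    have h0 : 0 ≤ ∑ j ∈ range n, om ν (t j) := Finset.sum_nonneg fun j _ => om_nonneg hν1 (ht j)
    simp only [pow_zero, one_mul, sub_self, add_zero]
    nlinarith
  | succ d =>
    set X : ℝ := (2 * (ν : ℝ)) ^ d with hX
    set θ : ℝ := (flog (2 : ℕ))⁻¹ with hθ
    have hνR : (2 : ℝ) ≤ ν := by exact_mod_cast hn.trans hν
    have hnR : (n : ℝ) ≤ ν := by exact_mod_cast hν
    have hX1 : 1 ≤ X := one_le_pow₀ (by linarith)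
    have h1 : ∑ j ∈ range n, om ν (t j) ≤ θ ^ d * ∑ j ∈ range n, t j + n * (X - 1) := by
      calc ∑ j ∈ range n, om ν (t j) ≤ ∑ j ∈ range n, (θ ^ d * t j + (X - 1)) :=
            Finset.sum_le_sum fun j _ => om_le hν1 (ht j) d
        _ = _ := by
          rw [Finset.sum_add_distrib, ← Finset.mul_sum]; simp; ring
    have hθd : 0 ≤ θ ^ d := pow_nonneg theta_pos.le d
    have h2 : (flog n)⁻¹ * ∑ j ∈ range n, om ν (t j) ≤
        θ * (θ ^ d * ∑ j ∈ range n, t j) + n * (X - 1) := by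
      have h3 : (flog n)⁻¹ * ∑ j ∈ range n, om ν (t j) ≤
        (flog n)⁻¹ * (θ ^ d * ∑ j ∈ range n, t j + n * (X - 1)) :=
        mul_le_mul_of_nonneg_left h1 hf0
      have h4 : 0 ≤ θ ^ d * ∑ j ∈ range n, t j := mul_nonneg hθd ht0
      have h5 : 0 ≤ (n : ℝ) * (X - 1) := mul_nonneg (Nat.cast_nonneg n) (by linarith)
      nlinarith
    have h6 : θ * (θ ^ d * ∑ j ∈ range n, t j) ≤ θ ^ (d + 1) * s := by
      rw [← mul_assoc, ← pow_succ']
      exact mul_le_mul_of_nonneg_left (by linarith) (pow_nonneg theta_pos.le _)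
    have h7 : (2 * (ν : ℝ)) ^ (d + 1) = 2 * ν * X := by rw [pow_succ']
    rw [h7]
    nlinarith

/-- the pieces completely contained in `D` -/
def fullS (u : ℕ → c00) (k : ℕ) (D : Finset ℕ) : Finset ℕ :=
  (range k).filter (fun l => (u l).support ⊆ D)

/-- the error potential -/
noncomputable def ee (N : c00 → ℝ) (ν k : ℕ) (u : ℕ → c00) (D : Finset ℕ) : ℝ :=
  2 / (k : ℝ) * om ν ((fullS u k D).card) +
    ∑ l ∈ (range k).filter (fun l => ¬ (u l).support ⊆ D), N (proj D (u l))

lemma exists_cut {c : ℕ → ℕ} (hc0 : c 0 = 0) {n t : ℕ} (ht : t < c n) :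
    ∃ j < n, c j ≤ t ∧ t < c (j + 1) := by
  induction n with
  | zero => omega
  | succ n ih =>
    by_cases h : t < c n
    · obtain ⟨j, hj, h1⟩ := ih h
      exact ⟨j, by omega, h1⟩
    · exact ⟨n, by omega, not_lt.1 h, ht⟩

lemma cut_unique {c : ℕ → ℕ} (hc : Monotone c) {j j' t : ℕ} (h1 : c j ≤ t) (h2 : t < c (j + 1))
    (h1' : c j' ≤ t) (h2' : t < c (j' + 1)) : j = j' := by
  rcases lt_trichotomy j j' with h | h | h
  · have := hc (show j + 1 ≤ j' from h); omega
  · exact h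
  · have := hc (show j' + 1 ≤ j from h); omega

/-- the pieces newly split by the cuts -/
def splitS (u : ℕ → c00) (k n : ℕ) (c : ℕ → ℕ) (D : Finset ℕ) : Finset ℕ :=
  (fullS u k D).filter (fun l => ∀ j ∈ range n, ¬ (u l).support ⊆ D ∩ Ico (c j) (c (j+1)))

lemma splitS_card {u : ℕ → c00} {k n : ℕ} {c : ℕ → ℕ} {D : Finset ℕ}
    (hu0 : ∀ l < k, u l ≠ 0)
    (hus : ∀ l l', l < l' → l' < k → FLt (u l).support (u l').support)
    (hc0 : c 0 = 0) (hD : ∀ t ∈ D, t < c n) :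
    (splitS u k n c D).card ≤ n := by
  have key : ∀ l, ∃ j, l ∈ splitS u k n c D → j < n ∧
      (∃ t ∈ (u l).support, c j ≤ t ∧ t < c (j + 1)) ∧ ∃ t ∈ (u l).support, c (j + 1) ≤ t := by
    intro l
    by_cases hl : l ∈ splitS u k n c D
    · have hl' := hl
      unfold splitS fullS at hl'
      simp only [Finset.mem_filter, mem_range] at hl'
      obtain ⟨⟨hlk, hlD⟩, hsp⟩ := hl'
      have hne : (u l).support.Nonempty := Finsupp.support_nonempty_iff.2 (hu0 l hlk)
      set t := (u l).support.min' hne with ht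
      have htm : t ∈ (u l).support := Finset.min'_mem _ _
      obtain ⟨j, hj, h1, h2⟩ := exists_cut hc0 (hD t (hlD htm))
      refine ⟨j, fun _ => ⟨hj, ⟨t, htm, h1, h2⟩, ?_⟩⟩
      have := hsp j hj
      rw [Finset.not_subset] at this
      obtain ⟨s, hs, hs2⟩ := this
      refine ⟨s, hs, ?_⟩
      have hts : t ≤ s := Finset.min'_le _ _ hs
      rw [Finset.mem_inter, Finset.mem_Ico] at hs2
      by_contra h3
      exact hs2 ⟨hlD hs, by omega, by omega⟩
    · exact ⟨0, fun h => absurd h hl⟩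
  choose g hg using key
  have hsub : ∀ l ∈ splitS u k n c D, g l ∈ range n := fun l hl => mem_range.2 (hg l hl).1
  have hk : ∀ l ∈ splitS u k n c D, l < k := by
    intro l hl
    unfold splitS fullS at hl
    simp only [Finset.mem_filter, mem_range] at hl
    exact hl.1.1
  have hno : ∀ l ∈ splitS u k n c D, ∀ l' ∈ splitS u k n c D, l < l' → g l = g l' → False := by
    intro l hl l' hl' hll h
    obtain ⟨_, _, ⟨s, hs, hs1⟩⟩ := hg l hl
    obtain ⟨_, ⟨t, ht, ht1, ht2⟩, _⟩ := hg l' hl'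
    have := hus l l' hll (hk l' hl') s hs t ht
    rw [h] at hs1
    omega
  have := Finset.card_le_card_of_injOn g (s := splitS u k n c D) (t := range n)
    (fun l hl => by exact_mod_cast hsub l (by exact_mod_cast hl)) (by
      intro l hl l' hl' h
      have hl1 : l ∈ splitS u k n c D := by exact_mod_cast hl
      have hl2 : l' ∈ splitS u k n c D := by exact_mod_cast hl'
      rcases lt_trichotomy l l' with h1 | h1 | h1
      · exact (hno l hl1 l' hl2 h1 h).elim
      · exact h1
      · exact (hno l' hl2 l hl1 h1 h.symm).elim)
  simpa using this

lemma fullS_sum {u : ℕ → c00} {k n : ℕ} {c : ℕ → ℕ} {D : Finset ℕ}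
    (hu0 : ∀ l < k, u l ≠ 0) (hc : Monotone c) :
    ∑ j ∈ range n, (fullS u k (D ∩ Ico (c j) (c (j+1)))).card + (splitS u k n c D).card ≤
      (fullS u k D).card := by
  classical
  have hdis : ∀ j ∈ range n, ∀ j' ∈ range n, j ≠ j' →
      Disjoint (fullS u k (D ∩ Ico (c j) (c (j+1)))) (fullS u k (D ∩ Ico (c j') (c (j'+1)))) := by
    intro j _ j' _ hjj
    rw [Finset.disjoint_left]
    intro l h1 h2
    unfold fullS at h1 h2
    simp only [Finset.mem_filter, mem_range] at h1 h2
    obtain ⟨t, ht⟩ : (u l).support.Nonempty := Finsupp.support_nonempty_iff.2 (hu0 l h1.1)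
    have h3 := h1.2 ht
    have h4 := h2.2 ht
    simp only [Finset.mem_inter, Finset.mem_Ico] at h3 h4
    exact hjj (cut_unique hc h3.2.1 h3.2.2 h4.2.1 h4.2.2)
  rw [← Finset.card_biUnion hdis, ← Finset.card_union_of_disjoint]
  · apply Finset.card_le_card
    intro l hl
    rw [Finset.mem_union, Finset.mem_biUnion] at hl
    rcases hl with ⟨j, _, hl⟩ | hl
    · unfold fullS at hl ⊢
      simp only [Finset.mem_filter, mem_range] at hl ⊢
      exact ⟨hl.1, hl.2.trans Finset.inter_subset_left⟩
    · exact (Finset.mem_filter.1 hl).1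
  · rw [Finset.disjoint_left]
    intro l h1 h2
    rw [Finset.mem_biUnion] at h1
    obtain ⟨j, hj, h1⟩ := h1
    exact (Finset.mem_filter.1 h2).2 j hj (Finset.mem_filter.1 h1).2

section norm4
variable {N : c00 → ℝ} (hN : IsSchlumprechtNorm N)
include hN

lemma ee_nonneg {ν : ℕ} (hν : 1 ≤ ν) (k : ℕ) (u : ℕ → c00) (D : Finset ℕ) :
    0 ≤ ee N ν k u D := by
  unfold ee
  have h1 := om_nonneg hν (s := ((fullS u k D).card : ℝ)) (Nat.cast_nonneg _)
  have h2 : 0 ≤ ∑ l ∈ (range k).filter (fun l => ¬ (u l).support ⊆ D), N (proj D (u l)) :=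
    Finset.sum_nonneg fun _ _ => N_nonneg hN _
  positivity

lemma N_le_ee {ν : ℕ} (hν : 1 ≤ ν) (k : ℕ) (u : ℕ → c00) (hu : ∀ l < k, N (u l) ≤ 2 / k)
    (D : Finset ℕ) :
    N (proj D (∑ l ∈ range k, u l)) ≤ 2 * ((fullS u k D).card / k) + ee N ν k u D := by
  have h1 := om_nonneg hν (s := ((fullS u k D).card : ℝ)) (Nat.cast_nonneg _)
  have h2 : 0 ≤ 2 / (k : ℝ) * om ν ((fullS u k D).card) := by positivity
  unfold ee
  rw [proj_sum]
  refine (N_sum hN _ _).trans ?_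
  rw [← Finset.sum_filter_add_sum_filter_not (range k) (fun l => (u l).support ⊆ D)]
  have h3 : ∑ l ∈ (range k).filter (fun l => (u l).support ⊆ D), N (proj D (u l)) ≤
      2 * ((fullS u k D).card / k) := by
    calc _ ≤ ∑ l ∈ (range k).filter (fun l => (u l).support ⊆ D), (2 / k : ℝ) := by
          apply Finset.sum_le_sum
          intro l hl
          exact (N_proj_le hN _ _).trans (hu l (mem_range.1 (Finset.mem_filter.1 hl).1))
      _ = _ := by
        rw [Finset.sum_const, nsmul_eq_mul]; unfold fullS; ring
  linarith

lemma ee_step {ν : ℕ} {k n : ℕ} {u : ℕ → c00} {c : ℕ → ℕ} {D : Finset ℕ}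
    (hn : 2 ≤ n) (hν : n ≤ ν)
    (hu0 : ∀ l < k, u l ≠ 0) (hu : ∀ l < k, N (u l) ≤ 2 / k)
    (hus : ∀ l l', l < l' → l' < k → FLt (u l).support (u l').support)
    (hc : Monotone c) (hc0 : c 0 = 0) (hD : ∀ t ∈ D, t < c n) :
    (flog n)⁻¹ * ∑ j ∈ range n, ee N ν k u (D ∩ Ico (c j) (c (j+1))) ≤ ee N ν k u D := by
  have hf1 : 0 < flog n := zero_lt_one.trans_le (one_le_flog (by omega))
  have hom := om_step hn hν (fullS u k D).card
    (fun j => ((fullS u k (D ∩ Ico (c j) (c (j+1)))).card : ℝ)) (splitS u k n c D).card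
    (fun j => Nat.cast_nonneg _) (Nat.cast_nonneg _)
    (by exact_mod_cast splitS_card hu0 hus hc0 hD) (by exact_mod_cast fullS_sum hu0 hc)
  have hsum : ∀ x : c00, (flog n)⁻¹ * ∑ j ∈ range n, N (proj (D ∩ Ico (c j) (c (j+1))) x) ≤
      N (proj D x) := by
    intro x
    rw [inv_mul_le_iff₀ hf1]
    have := N_sum_le hN (proj D x) (by omega : 1 ≤ n) (fun j => Ico (c j) (c (j+1))) (by
      intro p q hpq _ a ha b hb
      rw [Finset.mem_Ico] at ha hb
      exact lt_of_lt_of_le ha.2 ((hc hpq).trans hb.1))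
    simpa only [proj_proj] using this
  have hpart : (flog n)⁻¹ * ∑ j ∈ range n,
      ∑ l ∈ (range k).filter (fun l => ¬ (u l).support ⊆ D ∩ Ico (c j) (c (j+1))),
        N (proj (D ∩ Ico (c j) (c (j+1))) (u l)) ≤
      ∑ l ∈ (range k).filter (fun l => ¬ (u l).support ⊆ D), N (proj D (u l)) +
        2 / k * (splitS u k n c D).card := by
    have e1 : (2 / k * (splitS u k n c D).card : ℝ) =
        ∑ l ∈ range k, if l ∈ splitS u k n c D then (2 / k : ℝ) else 0 := by
      rw [← Finset.sum_filter, Finset.sum_const, nsmul_eq_mul, mul_comm]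
      congr 3
      ext l
      simp only [Finset.mem_filter]
      constructor
      · intro h; exact ⟨(Finset.mem_filter.1 (Finset.mem_filter.1 h).1).1, h⟩
      · exact fun h => h.2
    rw [e1, Finset.sum_filter, ← Finset.sum_add_distrib]
    simp only [Finset.sum_filter]
    rw [Finset.sum_comm, Finset.mul_sum]
    apply Finset.sum_le_sum
    intro l hl
    have hlk := mem_range.1 hl
    have hk0 : (0 : ℝ) ≤ 2 / k := by positivity
    have hle : (flog n)⁻¹ * ∑ j ∈ range n, (if ¬ (u l).support ⊆ D ∩ Ico (c j) (c (j+1)) then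
        N (proj (D ∩ Ico (c j) (c (j+1))) (u l)) else 0) ≤ N (proj D (u l)) := by
      refine le_trans (mul_le_mul_of_nonneg_left (Finset.sum_le_sum fun j _ => ?_)
        (inv_nonneg.2 hf1.le)) (hsum (u l))
      split_ifs
      · exact N_nonneg hN _
      · exact le_rfl
    by_cases hlD : (u l).support ⊆ D
    · by_cases hls : l ∈ splitS u k n c D
      · rw [if_neg (by simpa using hlD), if_pos hls]
        have := (N_proj_le hN D (u l)).trans (hu l hlk)
        linarith
      · rw [if_neg (by simpa using hlD), if_neg hls]
        have hex : ∃ j ∈ range n, (u l).support ⊆ D ∩ Ico (c j) (c (j+1)) := by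
          by_contra hne
          push Not at hne
          apply hls
          exact Finset.mem_filter.2 ⟨Finset.mem_filter.2 ⟨hl, hlD⟩, hne⟩
        obtain ⟨j, hj, hjs⟩ := hex
        rw [Finset.sum_eq_zero]
        · simp
        · intro j' hj'
          split_ifs with h
          · rfl
          · rw [proj_eq_zero, N_zero hN]
            intro t ht ht2
            have h3 := hjs ht
            simp only [Finset.mem_inter, Finset.mem_Ico] at h3 ht2
            have := cut_unique hc h3.2.1 h3.2.2 ht2.2.1 ht2.2.2
            subst this
            exact h hjs
    · rw [if_pos hlD]
      have : (0 : ℝ) ≤ if l ∈ splitS u k n c D then (2 / k : ℝ) else 0 := by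
        split_ifs <;> simp [hk0]
      linarith
  unfold ee
  rw [Finset.sum_add_distrib, mul_add, ← Finset.mul_sum]
  have h8 : (2 / k : ℝ) * ((flog n)⁻¹ * ∑ j ∈ range n,
      om ν ((fullS u k (D ∩ Ico (c j) (c (j+1)))).card) + (splitS u k n c D).card) ≤
      2 / k * om ν (fullS u k D).card := mul_le_mul_of_nonneg_left hom (by positivity)
  linarith

lemma ee_full {ν : ℕ} (hν : 1 ≤ ν) {k : ℕ} (hk : 1 ≤ k) (u : ℕ → c00) (D : Finset ℕ)
    (hD : ∀ l < k, (u l).support ⊆ D) (d : ℕ) :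
    ee N ν k u D ≤ 2 * ((flog (2 : ℕ))⁻¹) ^ d + 2 * (2 * (ν : ℝ)) ^ d / k := by
  have hf : fullS u k D = range k := by
    unfold fullS
    exact Finset.filter_true_of_mem fun l hl => hD l (mem_range.1 hl)
  unfold ee
  rw [hf, Finset.sum_eq_zero, add_zero, Finset.card_range]
  · have h1 := om_le hν (s := (k : ℝ)) (Nat.cast_nonneg _) d
    have hk' : (0 : ℝ) < k := by exact_mod_cast hk
    calc 2 / (k : ℝ) * om ν k ≤ 2 / (k : ℝ) * (((flog (2 : ℕ))⁻¹) ^ d * k + ((2 * (ν : ℝ)) ^ d - 1)) :=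
          mul_le_mul_of_nonneg_left h1 (by positivity)
      _ ≤ 2 / (k : ℝ) * (((flog (2 : ℕ))⁻¹) ^ d * k + (2 * (ν : ℝ)) ^ d) :=
          mul_le_mul_of_nonneg_left (by linarith) (by positivity)
      _ = _ := by field_simp
  · intro l hl
    exact absurd (hD l (mem_range.1 (Finset.mem_filter.1 hl).1)) (Finset.mem_filter.1 hl).2

end norm4

/-- finitely supported vector with given coefficients -/
noncomputable def vec (S : Finset ℕ) (w : ℕ → ℝ) : c00 := ∑ i ∈ S, Finsupp.single i (w i)

lemma vec_apply (S : Finset ℕ) (w : ℕ → ℝ) (i : ℕ) : vec S w i = if i ∈ S then w i else 0 := by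
  unfold vec
  rw [Finsupp.finsetSum_apply]
  simp [Finsupp.single_apply]

lemma proj_vec (S E : Finset ℕ) (w : ℕ → ℝ) : proj E (vec S w) = vec (S ∩ E) w := by
  ext i
  rw [proj_apply, vec_apply, vec_apply]
  by_cases h1 : i ∈ E <;> by_cases h2 : i ∈ S <;> simp [h1, h2]

/-- the system of averages -/
structure Sys (N : c00 → ℝ) (ν k : ℕ → ℕ) (u : ℕ → ℕ → c00) : Prop where
  hk : ∀ i, 1 ≤ k i
  u0 : ∀ i l, l < k i → u i l ≠ 0
  us : ∀ i l l', l < l' → l' < k i → FLt (u i l).support (u i l').support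
  uss : ∀ i i' l l', i < i' → l < k i → l' < k i' → FLt (u i l).support (u i' l').support
  uN : ∀ i l, l < k i → N (u i l) ≤ 2 / k i
  νm : Monotone ν
  ν2 : ∀ i, 2 ≤ ν i
  νf : ∀ i, (flog (ν i))⁻¹ ≤ (1 / 2 : ℝ) ^ (i + 2)

/-- the averages -/
noncomputable def yy (k : ℕ → ℕ) (u : ℕ → ℕ → c00) (i : ℕ) : c00 := ∑ l ∈ range (k i), u i l

/-- proportion of pieces contained in `D` -/
noncomputable def mu (k : ℕ → ℕ) (u : ℕ → ℕ → c00) (D : Finset ℕ) (i : ℕ) : ℝ :=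
  ((fullS (u i) (k i) D).card : ℝ) / k i

/-- total error potential -/
noncomputable def eps (N : c00 → ℝ) (ν k : ℕ → ℕ) (u : ℕ → ℕ → c00) (D : Finset ℕ) (i : ℕ) : ℝ :=
  ee N (ν i) (k i) (u i) D + (flog (ν (i + 1)))⁻¹ * ∑ t ∈ D, |yy k u i t|

lemma mu_nonneg (k : ℕ → ℕ) (u : ℕ → ℕ → c00) (D : Finset ℕ) (i : ℕ) : 0 ≤ mu k u D i := by
  unfold mu; positivity

lemma yy_ne {k : ℕ → ℕ} {u : ℕ → ℕ → c00} {i t : ℕ} (h : yy k u i t ≠ 0) :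
    ∃ l < k i, t ∈ (u i l).support := by
  unfold yy at h
  rw [Finsupp.finsetSum_apply] at h
  obtain ⟨l, hl, h2⟩ := Finset.exists_ne_zero_of_sum_ne_zero h
  exact ⟨l, mem_range.1 hl, Finsupp.mem_support_iff.2 h2⟩

lemma l1_cuts (x : c00) (D : Finset ℕ) {c : ℕ → ℕ} (hc : Monotone c) (n : ℕ) :
    ∑ j ∈ range n, ∑ t ∈ D ∩ Ico (c j) (c (j+1)), |x t| ≤ ∑ t ∈ D, |x t| := by
  classical
  rw [← Finset.sum_biUnion]
  · apply Finset.sum_le_sum_of_subset_of_nonneg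
    · intro t ht
      rw [Finset.mem_biUnion] at ht
      obtain ⟨j, _, h⟩ := ht
      exact (Finset.mem_inter.1 h).1
    · intro t _ _
      exact abs_nonneg _
  · intro j _ j' _ hjj
    simp only [Function.onFun]
    rw [Finset.disjoint_left]
    intro t h3 h4
    simp only [Finset.mem_inter, Finset.mem_Ico] at h3 h4
    exact hjj (cut_unique hc h3.2.1 h3.2.2 h4.2.1 h4.2.2)

section norm5
variable {N : c00 → ℝ} (hN : IsSchlumprechtNorm N)
  {ν k : ℕ → ℕ} {u : ℕ → ℕ → c00} (hS : Sys N ν k u)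

include hS in
lemma yy_unique {i i' t : ℕ} (h : yy k u i t ≠ 0) (h' : yy k u i' t ≠ 0) : i = i' := by
  obtain ⟨l, hl, ht⟩ := yy_ne h
  obtain ⟨l', hl', ht'⟩ := yy_ne h'
  rcases lt_trichotomy i i' with h1 | h1 | h1
  · exact absurd (hS.uss i i' l l' h1 hl hl' t ht t ht') (lt_irrefl _)
  · exact h1
  · exact absurd (hS.uss i' i l' l h1 hl' hl t ht' t ht) (lt_irrefl _)

include hS in
lemma sum_yy_apply (a : ℕ → ℝ) (S : Finset ℕ) {i t : ℕ} (h : yy k u i t ≠ 0) :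
    (∑ i' ∈ S, a i' • yy k u i') t = if i ∈ S then a i * yy k u i t else 0 := by
  rw [Finsupp.finsetSum_apply]
  split_ifs with hi
  · rw [Finset.sum_eq_single_of_mem i hi]
    · rfl
    · intro i' _ hne
      by_cases h' : yy k u i' t = 0
      · simp [h']
      · exact absurd (yy_unique hS h' h) hne
  · apply Finset.sum_eq_zero
    intro i' hi'
    by_cases h' : yy k u i' t = 0
    · simp [h']
    · exact absurd hi' ((yy_unique hS h' h) ▸ hi)

include hS in
lemma mu_sum (D : Finset ℕ) {c : ℕ → ℕ} (hc : Monotone c) (n i : ℕ) :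
    ∑ j ∈ range n, mu k u (D ∩ Ico (c j) (c (j+1))) i ≤ mu k u D i := by
  have := fullS_sum (n := n) (D := D) (hS.u0 i) hc
  unfold mu
  rw [← Finset.sum_div]
  apply div_le_div_of_nonneg_right _ (Nat.cast_nonneg _)
  have h2 : ∑ j ∈ range n, (fullS (u i) (k i) (D ∩ Ico (c j) (c (j+1)))).card ≤
    (fullS (u i) (k i) D).card := by omega
  exact_mod_cast h2

include hS in
lemma mu_succ (D : Finset ℕ) {c : ℕ → ℕ} (hc : Monotone c) (S : Finset ℕ) (a : ℕ → ℝ) {p q : ℕ}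
    (hpq : p < q) :
    ∀ i ∈ (vec S (fun i => |a i| * mu k u (D ∩ Ico (c p) (c (p+1))) i)).support,
    ∀ i' ∈ (vec S (fun i => |a i| * mu k u (D ∩ Ico (c q) (c (q+1))) i)).support, i ≤ i' := by
  have key : ∀ p i, i ∈ (vec S (fun i => |a i| * mu k u (D ∩ Ico (c p) (c (p+1))) i)).support →
      ∃ l < k i, ∃ t ∈ (u i l).support, c p ≤ t ∧ t < c (p + 1) := by
    intro p i hi
    rw [Finsupp.mem_support_iff, vec_apply] at hi
    have h1 : mu k u (D ∩ Ico (c p) (c (p+1))) i ≠ 0 := by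
      intro h0
      apply hi
      simp [h0]
    have h2 : (fullS (u i) (k i) (D ∩ Ico (c p) (c (p+1)))).card ≠ 0 := by
      intro h0
      apply h1
      simp [mu, h0]
    obtain ⟨l, hl⟩ := Finset.card_ne_zero.1 h2
    obtain ⟨hl1, hl2⟩ := Finset.mem_filter.1 hl
    have hlk := mem_range.1 hl1
    obtain ⟨t, ht⟩ : (u i l).support.Nonempty := Finsupp.support_nonempty_iff.2 (hS.u0 i l hlk)
    have := hl2 ht
    rw [Finset.mem_inter, Finset.mem_Ico] at this
    exact ⟨l, hlk, t, ht, this.2⟩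
  intro i hi i' hi'
  obtain ⟨l, hl, t, ht, h1, h2⟩ := key p i hi
  obtain ⟨l', hl', t', ht', h1', h2'⟩ := key q i' hi'
  by_contra hlt
  have h3 := hS.uss i' i l' l (not_le.1 hlt) hl' hl t' ht' t ht
  have := hc (show p + 1 ≤ q from hpq)
  omega

include hN hS

lemma ee_le_eps (D : Finset ℕ) (i : ℕ) : ee N (ν i) (k i) (u i) D ≤ eps N ν k u D i := by
  unfold eps
  have h1 : 0 ≤ ∑ t ∈ D, |yy k u i t| := Finset.sum_nonneg fun _ _ => abs_nonneg _
  have h2 : 1 ≤ flog (ν (i+1)) := one_le_flog (by have := hS.ν2 (i+1); omega)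
  have h3 : 0 ≤ (flog (ν (i+1)))⁻¹ := inv_nonneg.2 (by linarith)
  nlinarith [mul_nonneg h3 h1]

lemma ee_nn (D : Finset ℕ) (i : ℕ) : 0 ≤ ee N (ν i) (k i) (u i) D :=
  ee_nonneg hN (by have := hS.ν2 i; omega) _ _ _

lemma eps_nonneg (D : Finset ℕ) (i : ℕ) : 0 ≤ eps N ν k u D i :=
  (ee_nn hN hS D i).trans (ee_le_eps hN hS D i)

lemma N_yy_le (D : Finset ℕ) (i : ℕ) :
    N (proj D (yy k u i)) ≤ 2 * mu k u D i + eps N ν k u D i := by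
  have h1 := N_le_ee hN (ν := ν i) (by have := hS.ν2 i; omega) (k i) (u i) (hS.uN i) D
  have := ee_le_eps hN hS D i
  unfold mu yy
  linarith

lemma eps_step (D : Finset ℕ) {c : ℕ → ℕ} (hc : Monotone c) (hc0 : c 0 = 0) {n i : ℕ}
    (hn : 2 ≤ n) (hν : n ≤ ν i) (hD : ∀ t ∈ D, t < c n) :
    ∑ j ∈ range n, eps N ν k u (D ∩ Ico (c j) (c (j+1))) i ≤ flog n * eps N ν k u D i := by
  have hf1 : 1 ≤ flog n := one_le_flog (by omega)
  have h1 := ee_step hN hn hν (hS.u0 i) (hS.uN i) (hS.us i) hc hc0 hD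
  rw [inv_mul_le_iff₀ (by linarith)] at h1
  unfold eps
  rw [Finset.sum_add_distrib, ← Finset.mul_sum]
  have h2 := l1_cuts (yy k u i) D hc n
  have h3 : 1 ≤ flog (ν (i+1)) := one_le_flog (by have := hS.ν2 (i+1); omega)
  have h4 : 0 ≤ (flog (ν (i+1)))⁻¹ := inv_nonneg.2 (by linarith)
  have h5 := mul_le_mul_of_nonneg_left h2 h4
  have h6 : 0 ≤ ∑ t ∈ D, |yy k u i t| := Finset.sum_nonneg fun _ _ => abs_nonneg _
  have h7 := mul_nonneg h4 h6
  nlinarith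

lemma eps_small (D : Finset ℕ) {c : ℕ → ℕ} (hc : Monotone c) {n i : ℕ}
    (hn : 2 ≤ n) (hν : ν (i + 1) ≤ n) :
    ∑ j ∈ range n, N (proj (D ∩ Ico (c j) (c (j+1))) (yy k u i)) ≤ flog n * eps N ν k u D i := by
  have h2 := l1_cuts (yy k u i) D hc n
  have h3 : 1 ≤ flog (ν (i+1)) := one_le_flog (by have := hS.ν2 (i+1); omega)
  have h3' : flog (ν (i+1)) ≤ flog n := flog_le hν
  have h6 : 0 ≤ ∑ t ∈ D, |yy k u i t| := Finset.sum_nonneg fun _ _ => abs_nonneg _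
  have h1 : ∑ j ∈ range n, N (proj (D ∩ Ico (c j) (c (j+1))) (yy k u i)) ≤
      ∑ j ∈ range n, ∑ t ∈ D ∩ Ico (c j) (c (j+1)), |yy k u i t| := by
    apply Finset.sum_le_sum
    intro j _
    refine (N_le_l1 hN _).trans ?_
    refine (Finset.sum_le_sum_of_subset_of_nonneg (t := D ∩ Ico (c j) (c (j+1))) ?_ ?_).trans ?_
    · intro t ht
      rw [Finsupp.mem_support_iff, proj_apply] at ht
      by_contra h
      simp [h] at ht
    · intro t _ _; exact abs_nonneg _
    · apply Finset.sum_le_sum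
      intro t ht
      rw [proj_apply, if_pos ht]
  have h8 : flog n * ((flog (ν (i+1)))⁻¹ * ∑ t ∈ D, |yy k u i t|) ≤ flog n * eps N ν k u D i := by
    apply mul_le_mul_of_nonneg_left _ (by linarith)
    unfold eps
    linarith [ee_nn hN hS D i]
  have h9 : 1 ≤ flog n * (flog (ν (i+1)))⁻¹ := by
    rw [← div_eq_mul_inv, le_div_iff₀ (by linarith)]; linarith
  have h10 := mul_le_mul_of_nonneg_right h9 h6
  rw [mul_assoc] at h10
  linarith

lemma main_est (a : ℕ → ℝ) (M : ℕ) : ∀ (s : ℕ) (D : Finset ℕ) (m : ℕ),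
    (proj D (∑ i ∈ Ico m M, a i • yy k u i)).support.card ≤ s →
    N (proj D (∑ i ∈ Ico m M, a i • yy k u i)) ≤
      2 * (1 + (1 / 2 : ℝ) ^ m) * Phi N M (vec (Ico m M) (fun i => |a i| * mu k u D i)) +
        ∑ i ∈ Ico m M, |a i| * eps N ν k u D i := by
  intro s
  induction s using Nat.strong_induction_on with
  | _ s ih =>
  intro D m hs
  set Y : c00 := ∑ i ∈ Ico m M, a i • yy k u i with hY
  set b : c00 := vec (Ico m M) (fun i => |a i| * mu k u D i) with hb
  set R : ℝ := ∑ i ∈ Ico m M, |a i| * eps N ν k u D i with hR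
  have hCm : (2 : ℝ) ≤ 2 * (1 + (1 / 2 : ℝ) ^ m) := by
    have : (0 : ℝ) ≤ (1 / 2 : ℝ) ^ m := by positivity
    linarith
  have hPhi0 : 0 ≤ Phi N M b := Phi_nonneg hN M b
  have hR0 : 0 ≤ R := Finset.sum_nonneg fun i _ => mul_nonneg (abs_nonneg _) (eps_nonneg hN hS D i)
  apply N_le_cuts hN _ (D.sup (· + 1))
  · nlinarith
  · intro t
    rw [proj_apply]
    by_cases htD : t ∈ D
    · rw [if_pos htD]
      by_cases hex : ∃ i ∈ Ico m M, yy k u i t ≠ 0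
      · obtain ⟨i, hi, hne⟩ := hex
        rw [hY, sum_yy_apply hS a (Ico m M) hne, if_pos hi, abs_mul]
        have h1 : |yy k u i t| ≤ 2 * mu k u D i + eps N ν k u D i := by
          refine le_trans ?_ (N_yy_le hN hS D i)
          have := abs_le_N hN (proj D (yy k u i)) t
          rwa [proj_apply, if_pos htD] at this
        have h2 : |a i| * mu k u D i ≤ Phi N M b := by
          refine le_trans ?_ (le_Phi N M b (le_refl M))
          have h3 := abs_le_N hN (proj (range M) b) i
          rw [proj_apply, if_pos (mem_range.2 (Finset.mem_Ico.1 hi).2), hb, vec_apply, if_pos hi,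
            abs_of_nonneg (mul_nonneg (abs_nonneg _) (mu_nonneg _ _ _ _))] at h3
          linarith [N_nonneg hN (proj (Ico M M) b)]
        have h4 : |a i| * eps N ν k u D i ≤ R :=
          Finset.single_le_sum (f := fun i => |a i| * eps N ν k u D i)
            (fun i _ => mul_nonneg (abs_nonneg _) (eps_nonneg hN hS D i)) hi
        have h5 := mul_le_mul_of_nonneg_left h1 (abs_nonneg (a i))
        nlinarith
      · push Not at hex
        have : Y t = 0 := by
          rw [hY, Finsupp.finsetSum_apply]
          apply Finset.sum_eq_zero
          intro i hi
          simp [hex i hi]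
        rw [this, abs_zero]
        nlinarith
    · rw [if_neg htD, abs_zero]
      nlinarith
  · intro n hn c hc hc0 hcn hcard
    have hD : ∀ t ∈ D, t < c n := by
      intro t ht
      have : t + 1 ≤ D.sup (· + 1) := Finset.le_sup (f := (· + 1)) ht
      omega
    have hf1 : 1 ≤ flog n := one_le_flog (by omega)
    simp only [proj_proj] at hcard ⊢
    by_cases hgood : ∀ i ∈ Ico m M, n ≤ ν i
    · -- no small index
      have h1 : ∑ j ∈ range n, N (proj (D ∩ Ico (c j) (c (j+1))) Y) ≤
          ∑ j ∈ range n, (2 * (1 + (1 / 2 : ℝ) ^ m) *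
            Phi N M (vec (Ico m M) (fun i => |a i| * mu k u (D ∩ Ico (c j) (c (j+1))) i)) +
            ∑ i ∈ Ico m M, |a i| * eps N ν k u (D ∩ Ico (c j) (c (j+1))) i) := by
        apply Finset.sum_le_sum
        intro j hj
        exact ih _ (lt_of_lt_of_le (hcard j (mem_range.1 hj)) hs) _ m le_rfl
      rw [Finset.sum_add_distrib, ← Finset.mul_sum, Finset.sum_comm] at h1
      have h2 := Phi_good hN M n (by omega)
        (fun j => vec (Ico m M) (fun i => |a i| * mu k u (D ∩ Ico (c j) (c (j+1))) i))
        (by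
          intro j i
          rw [vec_apply]
          split_ifs
          · exact mul_nonneg (abs_nonneg _) (mu_nonneg _ _ _ _)
          · exact le_rfl)
        (fun p q hpq _ => mu_succ hS D hc (Ico m M) a hpq) b (by
          intro i
          simp only [hb, vec_apply]
          split_ifs
          · rw [← Finset.mul_sum]
            exact mul_le_mul_of_nonneg_left (mu_sum hS D hc n i) (abs_nonneg _)
          · simp)
      have h3 : ∑ i ∈ Ico m M, ∑ j ∈ range n, |a i| * eps N ν k u (D ∩ Ico (c j) (c (j+1))) i ≤
          flog n * R := by
        rw [hR, Finset.mul_sum]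
        apply Finset.sum_le_sum
        intro i hi
        rw [← Finset.mul_sum]
        have := mul_le_mul_of_nonneg_left (eps_step hN hS D hc hc0 hn (hgood i hi) hD)
          (abs_nonneg (a i))
        linarith
      have h4 := mul_le_mul_of_nonneg_left h2 (by linarith : 0 ≤ 2 * (1 + (1 / 2 : ℝ) ^ m))
      refine h1.trans ((add_le_add h4 h3).trans (le_of_eq ?_))
      ring
    · push Not at hgood
      obtain ⟨i0, hi0, hν0, hmax⟩ : ∃ i0 ∈ Ico m M, ν i0 < n ∧ ∀ i ∈ Ico (i0 + 1) M, n ≤ ν i := by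
        obtain ⟨i1, hi1, hi1n⟩ := hgood
        have hne : ((Ico m M).filter (fun i => ν i < n)).Nonempty :=
          ⟨i1, Finset.mem_filter.2 ⟨hi1, hi1n⟩⟩
        have hmem := Finset.max'_mem _ hne
        obtain ⟨h1, h2⟩ := Finset.mem_filter.1 hmem
        refine ⟨_, h1, h2, ?_⟩
        intro i hi
        by_contra hlt
        rw [Finset.mem_Ico] at hi h1
        have hmem2 : i ∈ (Ico m M).filter (fun i => ν i < n) := Finset.mem_filter.2
          ⟨Finset.mem_Ico.2 ⟨by omega, hi.2⟩, not_le.1 hlt⟩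
        have := Finset.le_max' _ i hmem2
        omega
      obtain ⟨hmi, hiM⟩ := Finset.mem_Ico.1 hi0
      set Y' : c00 := ∑ i ∈ Ico (i0 + 1) M, a i • yy k u i with hY'
      set b' : c00 := vec (Ico (i0 + 1) M) (fun i => |a i| * mu k u D i) with hb'
      have hsplit : ∀ {A : Type} [AddCommMonoid A] (F : ℕ → A),
          ∑ i ∈ Ico m M, F i = ∑ i ∈ Ico m i0, F i + F i0 + ∑ i ∈ Ico (i0 + 1) M, F i := by
        intro A _ F
        rw [← Finset.sum_Ico_succ_top hmi, Finset.sum_Ico_consecutive F (by omega) (by omega)]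
      have hpt : ∀ E, N (proj E Y) ≤ ∑ i ∈ Ico m i0, |a i| * N (proj E (yy k u i)) +
          |a i0| * N (proj E (yy k u i0)) + N (proj E Y') := by
        intro E
        rw [hY, hsplit, proj_add, proj_add, proj_sum, proj_smul]
        refine (N_add hN _ _).trans (add_le_add ((N_add hN _ _).trans (add_le_add ?_ ?_)) le_rfl)
        · refine (N_sum hN _ _).trans (le_of_eq (Finset.sum_congr rfl fun i _ => ?_))
          rw [proj_smul, N_smul hN]
        · rw [N_smul hN]
      have hsupp : ∀ E, (proj E Y').support ⊆ (proj E Y).support := by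
        intro E t ht
        rw [Finsupp.mem_support_iff, proj_apply] at ht ⊢
        split_ifs at ht ⊢ with hE
        · have ht' := ht
          rw [hY', Finsupp.finsetSum_apply] at ht'
          obtain ⟨i, hi, hne⟩ := Finset.exists_ne_zero_of_sum_ne_zero ht'
          have hne2 : yy k u i t ≠ 0 := by
            intro h0
            apply hne
            simp [h0]
          rw [hY', sum_yy_apply hS a _ hne2, if_pos hi] at ht
          rw [hY, sum_yy_apply hS a _ hne2, if_pos]
          · exact ht
          · rw [Finset.mem_Ico] at hi ⊢; omega
        · exact ht
      have g1 : ∑ j ∈ range n, N (proj (D ∩ Ico (c j) (c (j+1))) Y) ≤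
          ∑ j ∈ range n, (∑ i ∈ Ico m i0, |a i| * N (proj (D ∩ Ico (c j) (c (j+1))) (yy k u i)) +
          |a i0| * N (proj (D ∩ Ico (c j) (c (j+1))) (yy k u i0)) +
          N (proj (D ∩ Ico (c j) (c (j+1))) Y')) := Finset.sum_le_sum fun j _ => hpt _
      rw [Finset.sum_add_distrib, Finset.sum_add_distrib, Finset.sum_comm, ← Finset.mul_sum] at g1
      have g2 : ∑ i ∈ Ico m i0, ∑ j ∈ range n,
          |a i| * N (proj (D ∩ Ico (c j) (c (j+1))) (yy k u i)) ≤
          flog n * ∑ i ∈ Ico m i0, |a i| * eps N ν k u D i := by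
        rw [Finset.mul_sum]
        apply Finset.sum_le_sum
        intro i hi
        rw [← Finset.mul_sum]
        have hle : ν (i + 1) ≤ n :=
          (hS.νm (show i + 1 ≤ i0 from (Finset.mem_Ico.1 hi).2)).trans hν0.le
        have := mul_le_mul_of_nonneg_left (eps_small hN hS D hc hn hle) (abs_nonneg (a i))
        linarith
      have g3 : |a i0| * ∑ j ∈ range n, N (proj (D ∩ Ico (c j) (c (j+1))) (yy k u i0)) ≤
          flog n * (2 * (|a i0| * mu k u D i0) + |a i0| * eps N ν k u D i0) := by
        have h1 := N_sum_le hN (proj D (yy k u i0)) (by omega : 1 ≤ n)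
          (fun j => Ico (c j) (c (j+1))) (by
            intro p q hpq _ a ha b hb
            rw [Finset.mem_Ico] at ha hb
            exact lt_of_lt_of_le ha.2 ((hc hpq).trans hb.1))
        simp only [proj_proj] at h1
        have h2 := mul_le_mul_of_nonneg_left (N_yy_le hN hS D i0) (by linarith : 0 ≤ flog n)
        have h3 := mul_le_mul_of_nonneg_left (h1.trans h2) (abs_nonneg (a i0))
        refine h3.trans (le_of_eq ?_)
        ring
      have g4 : ∑ j ∈ range n, N (proj (D ∩ Ico (c j) (c (j+1))) Y') ≤
          ∑ j ∈ range n, (2 * (1 + (1 / 2 : ℝ) ^ (i0 + 1)) *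
            Phi N M (vec (Ico (i0 + 1) M) (fun i => |a i| * mu k u (D ∩ Ico (c j) (c (j+1))) i)) +
            ∑ i ∈ Ico (i0 + 1) M, |a i| * eps N ν k u (D ∩ Ico (c j) (c (j+1))) i) := by
        apply Finset.sum_le_sum
        intro j hj
        exact ih _ (lt_of_le_of_lt (Finset.card_le_card (hsupp _))
          (lt_of_lt_of_le (hcard j (mem_range.1 hj)) hs)) _ (i0 + 1) le_rfl
      rw [Finset.sum_add_distrib, ← Finset.mul_sum, Finset.sum_comm] at g4
      have g5 := Phi_bad hN M n (by omega)
        (fun j => vec (Ico (i0 + 1) M) (fun i => |a i| * mu k u (D ∩ Ico (c j) (c (j+1))) i))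
        (by
          intro j i
          rw [vec_apply]
          split_ifs
          · exact mul_nonneg (abs_nonneg _) (mu_nonneg _ _ _ _)
          · exact le_rfl)
        (fun p q hpq _ => mu_succ hS D hc (Ico (i0 + 1) M) a hpq) b' (by
          intro i
          simp only [hb', vec_apply]
          split_ifs
          · rw [← Finset.mul_sum]
            exact mul_le_mul_of_nonneg_left (mu_sum hS D hc n i) (abs_nonneg _)
          · simp)
      have g6 : ∑ i ∈ Ico (i0 + 1) M, ∑ j ∈ range n,
          |a i| * eps N ν k u (D ∩ Ico (c j) (c (j+1))) i ≤
          flog n * ∑ i ∈ Ico (i0 + 1) M, |a i| * eps N ν k u D i := by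
        rw [Finset.mul_sum]
        apply Finset.sum_le_sum
        intro i hi
        rw [← Finset.mul_sum]
        have := mul_le_mul_of_nonneg_left (eps_step hN hS D hc hc0 hn (hmax i hi) hD)
          (abs_nonneg (a i))
        linarith
      have hNb' : 0 ≤ N b' := N_nonneg hN b'
      have g7 : 2 * (1 + (1 / 2 : ℝ) ^ (i0 + 1)) * (flog n + 1) ≤
          flog n * (2 * (1 + (1 / 2 : ℝ) ^ m)) := by
        have h1 : (flog n)⁻¹ ≤ (1 / 2 : ℝ) ^ (i0 + 2) := by
          refine le_trans ?_ (hS.νf i0)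
          exact inv_anti₀ (zero_lt_one.trans_le
            (one_le_flog (by have := hS.ν2 i0; omega))) (flog_le hν0.le)
        have h2 : (1 / 2 : ℝ) ^ i0 ≤ (1 / 2 : ℝ) ^ m :=
          pow_le_pow_of_le_one (by norm_num) (by norm_num) hmi
        have h3 : (1 / 2 : ℝ) ^ i0 ≤ 1 := pow_le_one₀ (by norm_num) (by norm_num)
        have h4 : (0 : ℝ) ≤ (1 / 2 : ℝ) ^ i0 := by positivity
        rw [pow_succ, pow_succ] at h1
        rw [pow_succ]
        set q : ℝ := (1 / 2 : ℝ) ^ i0 with hq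
        have h5 : 1 ≤ flog n * (q * (1 / 2) * (1 / 2)) := by
          have := mul_le_mul_of_nonneg_left h1 (by linarith : 0 ≤ flog n)
          rwa [mul_inv_cancel₀ (by linarith)] at this
        have h6 : 2 * (1 + q * (1 / 2)) * (flog n + 1) ≤
            2 * (1 + q * (1 / 2)) * (flog n + flog n * (q * (1 / 2) * (1 / 2))) :=
          mul_le_mul_of_nonneg_left (by linarith) (by linarith)
        have h7 : 2 * (1 + q * (1 / 2)) * (flog n + flog n * (q * (1 / 2) * (1 / 2))) =
            flog n * (2 * ((1 + q * (1 / 2)) * (1 + q * (1 / 4)))) := by ring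
        have h8 : (1 + q * (1 / 2)) * (1 + q * (1 / 4)) ≤ 1 + q := by nlinarith
        have h9 : flog n * (2 * ((1 + q * (1 / 2)) * (1 + q * (1 / 4)))) ≤
            flog n * (2 * (1 + (1 / 2 : ℝ) ^ m)) :=
          mul_le_mul_of_nonneg_left (by linarith) (by linarith)
        linarith
      have g8 : |a i0| * mu k u D i0 + N b' ≤ Phi N M b := by
        refine le_trans ?_ (le_Phi N M b (show i0 + 1 ≤ M from hiM))
        have h3 := abs_le_N hN (proj (range (i0 + 1)) b) i0
        rw [proj_apply, if_pos (mem_range.2 (Nat.lt_succ_self i0)), hb, vec_apply, if_pos hi0,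
          abs_of_nonneg (mul_nonneg (abs_nonneg _) (mu_nonneg _ _ _ _))] at h3
        have h4 : proj (Ico (i0 + 1) M) b = b' := by
          rw [hb, proj_vec, hb']
          congr 1
          ext i
          simp only [Finset.mem_inter, Finset.mem_Ico]
          omega
        rw [h4]
        linarith
      have hRs := hsplit (fun i => |a i| * eps N ν k u D i)
      rw [← hR] at hRs
      have g9 := mul_le_mul_of_nonneg_left g5
        (by positivity : 0 ≤ 2 * (1 + (1 / 2 : ℝ) ^ (i0 + 1)))
      have g10 := mul_le_mul_of_nonneg_right g7 hNb'
      have hmu : 0 ≤ |a i0| * mu k u D i0 := mul_nonneg (abs_nonneg _) (mu_nonneg _ _ _ _)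
      have g11 : flog n * (2 * (|a i0| * mu k u D i0)) ≤
          flog n * (2 * (1 + (1 / 2 : ℝ) ^ m) * (|a i0| * mu k u D i0)) :=
        mul_le_mul_of_nonneg_left (mul_le_mul_of_nonneg_right hCm hmu) (by linarith)
      have g12 : flog n * (2 * (1 + (1 / 2 : ℝ) ^ m) * (|a i0| * mu k u D i0 + N b')) ≤
          flog n * (2 * (1 + (1 / 2 : ℝ) ^ m) * Phi N M b) :=
        mul_le_mul_of_nonneg_left (mul_le_mul_of_nonneg_left g8 (by linarith)) (by linarith)
      rw [hRs]
      simp only [mul_add] at g3 g12 ⊢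
      linarith

lemma upper_est (a : ℕ → ℝ) (M : ℕ) (hε : ∀ D i, (∀ l < k i, (u i l).support ⊆ D) →
      eps N ν k u D i ≤ 3 * (1 / 2 : ℝ) ^ i) :
    N (∑ i ∈ range M, a i • yy k u i) ≤ 14 * N (vec (range M) a) := by
  set D : Finset ℕ := (range M).biUnion fun i => (range (k i)).biUnion fun l => (u i l).support
    with hD
  have hDi : ∀ i < M, ∀ l < k i, (u i l).support ⊆ D := by
    intro i hi l hl t ht
    exact Finset.mem_biUnion.2 ⟨i, mem_range.2 hi,
      Finset.mem_biUnion.2 ⟨l, mem_range.2 hl, ht⟩⟩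
  have h1 := main_est hN hS a M _ D 0 le_rfl
  rw [proj_eq_self, Nat.Ico_zero_eq_range] at h1
  · set A := N (vec (range M) a) with hA
    have hmu : ∀ i < M, mu k u D i ≤ 1 := by
      intro i _
      unfold mu
      apply div_le_one_of_le₀ _ (Nat.cast_nonneg _)
      have : (fullS (u i) (k i) D).card ≤ k i := by
        have h0 := Finset.card_le_card
          (Finset.filter_subset (fun l => (u i l).support ⊆ D) (range (k i)))
        rw [Finset.card_range] at h0
        exact h0
      exact_mod_cast this
    have h2 : Phi N M (vec (range M) (fun i => |a i| * mu k u D i)) ≤ 2 * A := by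
      refine (Phi_le hN _ _).trans ?_
      have : N (vec (range M) (fun i => |a i| * mu k u D i)) ≤ A := by
        apply N_mono hN
        intro i
        rw [vec_apply, vec_apply]
        split_ifs with hi
        · rw [abs_mul, abs_abs, abs_of_nonneg (mu_nonneg k u D i)]
          exact mul_le_of_le_one_right (abs_nonneg _) (hmu i (mem_range.1 hi))
        · exact le_rfl
      linarith
    have h3 : ∑ i ∈ range M, |a i| * eps N ν k u D i ≤ ∑ i ∈ range M, A * (3 * (1 / 2 : ℝ) ^ i) := by
      apply Finset.sum_le_sum
      intro i hi
      apply mul_le_mul _ (hε D i (hDi i (mem_range.1 hi))) (eps_nonneg hN hS D i) (N_nonneg hN _)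
      have := abs_le_N hN (vec (range M) a) i
      rwa [vec_apply, if_pos hi] at this
    have h4 : ∑ i ∈ range M, (1 / 2 : ℝ) ^ i ≤ 2 := sum_geometric_two_le M
    rw [← Finset.mul_sum, ← Finset.mul_sum] at h3
    have h5 : A * (3 * ∑ i ∈ range M, (1 / 2 : ℝ) ^ i) ≤ A * 6 :=
      mul_le_mul_of_nonneg_left (by linarith) (N_nonneg hN _)
    rw [pow_zero] at h1
    linarith
  · intro t ht
    rw [Finsupp.mem_support_iff, Finsupp.finsetSum_apply] at ht
    obtain ⟨i, hi, hne⟩ := Finset.exists_ne_zero_of_sum_ne_zero ht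
    have hne2 : yy k u i t ≠ 0 := by
      intro h0
      apply hne
      simp [h0]
    obtain ⟨l, hl, htl⟩ := yy_ne hne2
    exact hDi i (by have := Finset.mem_Ico.1 hi; omega) l hl htl

end norm5

lemma proj_blocks {y : ℕ → c00} (hy : ∀ i i', i < i' → FLt (y i).support (y i').support)
    (a : ℕ → ℝ) (S T : Finset ℕ) (hT : T ⊆ S) :
    proj (T.biUnion fun i => (y i).support) (∑ i ∈ S, a i • y i) = ∑ i ∈ T, a i • y i := by
  rw [proj_sum, ← Finset.sum_subset hT]
  · apply Finset.sum_congr rfl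
    intro i hi
    apply proj_eq_self
    intro t ht
    exact Finset.mem_biUnion.2 ⟨i, hi, Finsupp.support_smul ht⟩
  · intro i _ hiT
    apply proj_eq_zero
    intro t ht ht2
    have ht := Finsupp.support_smul ht
    obtain ⟨i', hi', ht'⟩ := Finset.mem_biUnion.1 ht2
    rcases lt_trichotomy i i' with h | h | h
    · exact absurd (hy i i' h t ht t ht') (lt_irrefl _)
    · subst h; exact hiT hi'
    · exact absurd (hy i' i h t ht' t ht) (lt_irrefl _)

lemma block_lt {z : ℕ → c00} (hz : IsBlockSeq z) :
    ∀ i i', i < i' → FLt (z i).support (z i').support := by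
  intro i i' h
  induction i', h using Nat.le_induction with
  | base => exact hz.2 i
  | succ n hn ih =>
    intro s hs t ht
    obtain ⟨r, hr⟩ : (z n).support.Nonempty := Finsupp.support_nonempty_iff.2 (hz.1 n)
    exact (ih s hs r hr).trans (hz.2 n r hr t ht)

lemma sum_chunks (F : ℕ → c00) (M L n : ℕ) :
    ∑ l ∈ range n, ∑ i ∈ Ico (M + l * L) (M + l * L + L), F i = ∑ i ∈ Ico M (M + n * L), F i := by
  induction n with
  | zero => simp
  | succ n ih =>
    rw [Finset.sum_range_succ, ih, Finset.sum_Ico_consecutive F (by omega) (by omega)]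
    congr 2
    ring

lemma exists_big_pow (k : ℕ) (hk : 1 ≤ k) : ∃ p, flog ((k ^ p : ℕ)) < 2 ^ p := by
  refine ⟨4 * k, ?_⟩
  set p := 4 * k with hp
  have h1 : flog ((k ^ p : ℕ)) ≤ k * p + 1 := by
    unfold flog
    rw [Real.logb_le_iff_le_rpow (by norm_num) (by positivity)]
    have h2 : k ^ p + 1 ≤ 2 ^ (k * p + 1) := by
      have h3 : k ^ p ≤ (2 ^ k) ^ p := Nat.pow_le_pow_left Nat.lt_two_pow_self.le p
      rw [← pow_mul] at h3
      have h4 : 1 ≤ 2 ^ (k * p) := Nat.one_le_two_pow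
      rw [pow_succ]
      omega
    have h5 : ((k ^ p + 1 : ℕ) : ℝ) ≤ ((2 ^ (k * p + 1) : ℕ) : ℝ) := by exact_mod_cast h2
    have h6 : (2 : ℝ) ^ ((k : ℝ) * p + 1) = ((2 ^ (k * p + 1) : ℕ) : ℝ) := by
      rw [show ((k : ℝ) * p + 1) = ((k * p + 1 : ℕ) : ℝ) by push_cast; ring, Real.rpow_natCast]
      push_cast; ring
    rw [h6]
    push_cast at h5 ⊢
    linarith
  refine lt_of_le_of_lt h1 ?_
  have h2 : k * p + 1 < 2 ^ p := by
    have h3 : ∀ n : ℕ, 2 * n + 1 ≤ 4 ^ n := by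
      intro n
      induction n with
      | zero => norm_num
      | succ n ih => rw [pow_succ]; omega
    have h4 : 2 ^ p = 4 ^ k * 4 ^ k := by
      rw [hp, show 4 * k = 2 * k + 2 * k by ring, pow_add, pow_mul]; norm_num
    rw [h4]
    have h5 := Nat.mul_le_mul (h3 k) (h3 k)
    rw [hp]
    nlinarith
  exact_mod_cast h2

section norm6
variable {N : c00 → ℝ} (hN : IsSchlumprechtNorm N)
include hN

lemma lower_est {y : ℕ → c00} (hy : ∀ i i', i < i' → FLt (y i).support (y i').support)
    (h1 : ∀ i, N (y i) = 1) (a : ℕ → ℝ) : ∀ (s : ℕ) (S : Finset ℕ),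
    (vec S a).support.card ≤ s → N (vec S a) ≤ N (∑ i ∈ S, a i • y i) := by
  intro s
  induction s using Nat.strong_induction_on with
  | _ s ih =>
  intro S hs
  apply N_le hN
  · exact N_nonneg hN _
  · intro i
    rw [vec_apply]
    split_ifs with hi
    · have h := proj_blocks hy a S {i} (by simpa using hi)
      rw [Finset.sum_singleton] at h
      have h2 := N_proj_le hN (({i} : Finset ℕ).biUnion fun i => (y i).support)
        (∑ i ∈ S, a i • y i)
      rw [h, N_smul hN, h1, mul_one] at h2
      exact h2
    · rw [abs_zero]; exact N_nonneg hN _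
  · intro n hn E hE hcard
    have h2 : ∀ p < n, N (proj (E p) (vec S a)) ≤
        N (proj ((S ∩ E p).biUnion fun i => (y i).support) (∑ i ∈ S, a i • y i)) := by
      intro p hp
      have h3 := hcard p hp
      rw [proj_vec] at h3 ⊢
      rw [proj_blocks hy a S _ Finset.inter_subset_left]
      exact ih _ (lt_of_lt_of_le h3 hs) _ le_rfl
    refine (Finset.sum_le_sum fun p hp => h2 p (mem_range.1 hp)).trans ?_
    apply N_sum_le hN _ (by omega) (fun p => (S ∩ E p).biUnion fun i => (y i).support)
    intro p q hpq hq s hs t ht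
    obtain ⟨i, hi, hs⟩ := Finset.mem_biUnion.1 hs
    obtain ⟨i', hi', ht⟩ := Finset.mem_biUnion.1 ht
    exact hy i i' (hE p q hpq hq i (Finset.mem_inter.1 hi).2 i' (Finset.mem_inter.1 hi').2) s hs t ht

lemma avg {z : ℕ → c00} (hz : IsBlockSeq z) (M0 k : ℕ) (hk : 1 ≤ k) :
    ∃ (M M' : ℕ) (c : ℕ → ℝ) (u : ℕ → c00), M0 ≤ M ∧ M ≤ M' ∧
      (∀ l < k, u l ≠ 0) ∧ (∀ l l', l < l' → l' < k → FLt (u l).support (u l').support) ∧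
      (∀ l < k, N (u l) ≤ 2 / k) ∧ N (∑ l ∈ range k, u l) = 1 ∧
      ∑ l ∈ range k, u l = ∑ i ∈ Ico M M', c i • z i ∧
      ∀ l < k, ∀ t ∈ (u l).support, ∃ i ∈ Ico M M', t ∈ (z i).support := by
  have hzl := block_lt hz
  have hkR : (0 : ℝ) < k := by exact_mod_cast hk
  set w : ℕ → c00 := fun i => (N (z i))⁻¹ • z i with hw
  have hzpos : ∀ i, 0 < N (z i) := fun i => N_pos hN (hz.1 i)
  have hw1 : ∀ i, N (w i) = 1 := by
    intro i
    rw [hw]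
    simp only
    rw [N_smul hN, abs_of_pos (inv_pos.2 (hzpos i)), inv_mul_cancel₀ (hzpos i).ne']
  have hws : ∀ i, (w i).support ⊆ (z i).support := fun i => Finsupp.support_smul
  have hwl : ∀ i i', i < i' → FLt (w i).support (w i').support :=
    fun i i' h s hs t ht => hzl i i' h s (hws i hs) t (hws i' ht)
  set V : ℕ → ℕ → c00 := fun p M => ∑ i ∈ Ico M (M + k ^ p), w i with hV
  have hproj : ∀ p M i, i ∈ Ico M (M + k ^ p) → proj (w i).support (V p M) = w i := by
    intro p M i hi
    have h := proj_blocks hwl (fun _ => 1) (Ico M (M + k ^ p)) {i} (by simpa using hi)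
    simpa only [Finset.singleton_biUnion, one_smul, Finset.sum_singleton] using h
  have hkp : ∀ p, 1 ≤ k ^ p := fun p => Nat.one_le_pow _ _ hk
  have hV1 : ∀ p M, 1 ≤ N (V p M) := by
    intro p M
    have := N_proj_le hN (w M).support (V p M)
    rwa [hproj p M M (by have := hkp p; rw [Finset.mem_Ico]; omega), hw1] at this
  have hlow : ∀ p M, (k : ℝ) ^ p ≤ flog ((k ^ p : ℕ)) * N (V p M) := by
    intro p M
    have h := N_sum_le hN (V p M) (hkp p) (fun j => (w (M + j)).support) (by
      intro i j hij _
      exact hwl _ _ (by omega))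
    refine le_trans (le_of_eq ?_) h
    rw [Finset.sum_congr rfl (g := fun _ => (1 : ℝ))]
    · simp
    · intro j hj
      rw [hproj p M (M + j) (by have := mem_range.1 hj; rw [Finset.mem_Ico]; omega), hw1]
  have hex : ∃ p, ∃ M, M0 ≤ M ∧ ((k : ℝ) / 2) ^ p < N (V p M) := by
    obtain ⟨p, hp⟩ := exists_big_pow k hk
    refine ⟨p, M0, le_rfl, ?_⟩
    have h1 := hlow p M0
    have h2 : 0 < N (V p M0) := zero_lt_one.trans_le (hV1 p M0)
    rw [div_pow, div_lt_iff₀ (by positivity)]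
    nlinarith
  classical
  obtain ⟨M, hM, hlt⟩ := Nat.find_spec hex
  have hmin := fun q (hq : q < Nat.find hex) => Nat.find_min hex hq
  generalize Nat.find hex = p at hlt hmin
  obtain ⟨q, rfl⟩ : ∃ q, p = q + 1 := by
    cases p with
    | zero =>
      exfalso
      simp [hV, hw1] at hlt
    | succ q => exact ⟨q, rfl⟩
  have hq := hmin q (Nat.lt_succ_self q)
  push Not at hq
  set A := N (V (q + 1) M) with hA
  have hA0 : 0 < A := zero_lt_one.trans_le (hV1 _ _)
  have hsum : ∑ l ∈ range k, A⁻¹ • V q (M + l * k ^ q) = A⁻¹ • V (q + 1) M := by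
    rw [← Finset.smul_sum]
    congr 1
    simp only [hV]
    rw [sum_chunks w M (k ^ q) k, pow_succ']
  have hsup : ∀ l, ∀ t ∈ (A⁻¹ • V q (M + l * k ^ q)).support,
      ∃ i ∈ Ico (M + l * k ^ q) (M + l * k ^ q + k ^ q), t ∈ (z i).support := by
    intro l t ht
    have ht := Finsupp.support_smul ht
    rw [Finsupp.mem_support_iff] at ht
    simp only [hV] at ht
    rw [Finsupp.finsetSum_apply] at ht
    obtain ⟨i, hi, hne⟩ := Finset.exists_ne_zero_of_sum_ne_zero ht
    exact ⟨i, hi, hws i (Finsupp.mem_support_iff.2 hne)⟩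
  have hmulq : ∀ l l', l < l' → l * k ^ q + k ^ q ≤ l' * k ^ q := by
    intro l l' h
    calc l * k ^ q + k ^ q = (l + 1) * k ^ q := by ring
      _ ≤ l' * k ^ q := Nat.mul_le_mul_right _ h
  refine ⟨M, M + k ^ (q + 1), fun i => A⁻¹ * (N (z i))⁻¹, fun l => A⁻¹ • V q (M + l * k ^ q),
    hM, by omega, ?_, ?_, ?_, ?_, ?_, ?_⟩
  · intro l _ h0
    replace h0 : A⁻¹ • V q (M + l * k ^ q) = 0 := h0
    have h1 := hV1 q (M + l * k ^ q)
    have h2 := N_smul hN A⁻¹ (V q (M + l * k ^ q))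
    rw [h0, N_zero hN, abs_of_pos (inv_pos.2 hA0)] at h2
    have := mul_pos (inv_pos.2 hA0) (zero_lt_one.trans_le h1)
    linarith
  · intro l l' hll _ s hs t ht
    obtain ⟨i, hi, hs⟩ := hsup l s hs
    obtain ⟨i', hi', ht⟩ := hsup l' t ht
    rw [Finset.mem_Ico] at hi hi'
    have := hmulq l l' hll
    exact hzl i i' (by omega) s hs t ht
  · intro l _
    rw [N_smul hN, abs_of_pos (inv_pos.2 hA0)]
    have h1 := hq (M + l * k ^ q) (by omega)
    rw [inv_mul_le_iff₀ hA0]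
    have h2 : ((k : ℝ) / 2) ^ q = ((k : ℝ) / 2) ^ (q + 1) * (2 / k) := by
      rw [pow_succ]; field_simp
    rw [h2] at h1
    exact h1.trans (mul_le_mul_of_nonneg_right hlt.le (by positivity))
  · rw [hsum, N_smul hN, abs_of_pos (inv_pos.2 hA0)]
    exact inv_mul_cancel₀ hA0.ne'
  · rw [hsum]
    simp only [hV, hw]
    rw [Finset.smul_sum]
    exact Finset.sum_congr rfl fun i _ => smul_smul _ _ _
  · intro l hl t ht
    obtain ⟨i, hi, ht⟩ := hsup l t ht
    refine ⟨i, ?_, ht⟩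
    have := hmulq l k hl
    rw [pow_succ']
    rw [Finset.mem_Ico] at hi ⊢
    omega

end norm6

/-- output of one step of the construction -/
structure Out where
  k : ℕ
  u : ℕ → c00
  a : ℕ
  M' : ℕ
  ν' : ℕ
  c : ℕ → ℝ

/-- properties of one step of the construction -/
structure Good (N : c00 → ℝ) (z : ℕ → c00) (i M ν : ℕ) (o : Out) : Prop where
  hk : 1 ≤ o.k
  ha : M ≤ o.a
  haM : o.a ≤ o.M'
  u0 : ∀ l < o.k, o.u l ≠ 0
  us : ∀ l l', l < l' → l' < o.k → FLt (o.u l).support (o.u l').support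
  uN : ∀ l < o.k, N (o.u l) ≤ 2 / o.k
  n1 : N (∑ l ∈ range o.k, o.u l) = 1
  eq : ∑ l ∈ range o.k, o.u l = ∑ i ∈ Ico o.a o.M', o.c i • z i
  sup : ∀ l < o.k, ∀ t ∈ (o.u l).support, ∃ i ∈ Ico o.a o.M', t ∈ (z i).support
  hν : ν ≤ o.ν'
  νf : (flog o.ν')⁻¹ ≤ (1 / 2 : ℝ) ^ (i + 3)
  hee : ∀ D, (∀ l < o.k, (o.u l).support ⊆ D) → ee N ν o.k o.u D ≤ 2 * (1 / 2 : ℝ) ^ i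
  hl1 : ∀ D : Finset ℕ, (flog o.ν')⁻¹ * ∑ t ∈ D, |(∑ l ∈ range o.k, o.u l) t| ≤ (1 / 2 : ℝ) ^ i

lemma l1_le (x : c00) (D : Finset ℕ) : ∑ t ∈ D, |x t| ≤ ∑ t ∈ x.support, |x t| := by
  classical
  have : ∑ t ∈ D, |x t| = ∑ t ∈ D ∩ x.support, |x t| := by
    symm
    apply Finset.sum_subset Finset.inter_subset_left
    intro t ht ht2
    have : t ∉ x.support := fun h => ht2 (Finset.mem_inter.2 ⟨ht, h⟩)
    rw [Finsupp.notMem_support_iff] at this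
    simp [this]
  rw [this]
  exact Finset.sum_le_sum_of_subset_of_nonneg Finset.inter_subset_right fun _ _ _ => abs_nonneg _

lemma exists_out {N : c00 → ℝ} (hN : IsSchlumprechtNorm N) {z : ℕ → c00} (hz : IsBlockSeq z)
    (i M ν : ℕ) (hν : 1 ≤ ν) : ∃ o : Out, Good N z i M ν o := by
  obtain ⟨d, hd⟩ : ∃ d : ℕ, ((flog (2 : ℕ))⁻¹) ^ d < (1 / 2 : ℝ) ^ (i + 1) :=
    exists_pow_lt_of_lt_one (by positivity) theta_lt_one
  obtain ⟨k0, hk0⟩ := exists_nat_ge (2 * (2 * (ν : ℝ)) ^ d * 2 ^ i)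
  set k := k0 + 1 with hk
  obtain ⟨a, M', c, u, ha, haM, hu0, hus, huN, hn1, heq, hsup⟩ := avg hN hz M k (by omega)
  set L : ℝ := ∑ t ∈ (∑ l ∈ range k, u l).support, |(∑ l ∈ range k, u l) t| with hL
  have hL0 : 0 ≤ L := Finset.sum_nonneg fun _ _ => abs_nonneg _
  obtain ⟨Q, hQ⟩ := exists_nat_ge (max ((2 : ℝ) ^ (i + 3)) (L * 2 ^ i))
  have hQ1 := (le_max_left _ _).trans hQ
  have hQ2 := (le_max_right _ _).trans hQ
  set ν' := max ν (2 ^ Q) with hν'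
  have hf : (Q : ℝ) ≤ flog ν' := (flog_two_pow Q).trans (flog_le (le_max_right _ _))
  have hp : ∀ n : ℕ, (0 : ℝ) < 2 ^ n := fun n => by positivity
  have hf0 : 0 < flog ν' := lt_of_lt_of_le (hp (i + 3)) (hQ1.trans hf)
  refine ⟨⟨k, u, a, M', ν', c⟩, ⟨by simp [hk], ha, haM, hu0, hus, huN, hn1, heq, hsup,
    le_max_left _ _, ?_, ?_, ?_⟩⟩
  · simp only
    rw [one_div, inv_pow]
    exact inv_anti₀ (hp _) (hQ1.trans hf)
  · intro D hD
    refine (ee_full hN hν (show 1 ≤ k by omega) u D hD d).trans ?_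
    have hkR : (0 : ℝ) < k := by exact_mod_cast (by omega : 0 < k)
    have h1 : 2 * (2 * (ν : ℝ)) ^ d / k ≤ (1 / 2 : ℝ) ^ i := by
      rw [div_le_iff₀ hkR, one_div, inv_pow, inv_mul_eq_div, le_div_iff₀ (hp i)]
      refine hk0.trans ?_
      rw [hk]; push_cast; linarith
    rw [pow_succ] at hd
    linarith
  · intro D
    simp only
    have h1 := l1_le (∑ l ∈ range k, u l) D
    rw [← hL] at h1
    rw [inv_mul_le_iff₀ hf0]
    have h2 : L ≤ flog ν' * (1 / 2 : ℝ) ^ i := by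
      rw [one_div, inv_pow, ← div_eq_mul_inv, le_div_iff₀ (hp i)]
      linarith
    linarith

lemma exists_sys {N : c00 → ℝ} (hN : IsSchlumprechtNorm N) {z : ℕ → c00} (hz : IsBlockSeq z) :
    ∃ (ν k : ℕ → ℕ) (u : ℕ → ℕ → c00) (I : ℕ → Finset ℕ) (c : ℕ → ℝ), Sys N ν k u ∧
      (∀ m n : ℕ, m < n → FLt (I m) (I n)) ∧
      (∀ n, yy k u n = ∑ i ∈ I n, c i • z i) ∧ (∀ n, N (yy k u n) = 1) ∧
      ∀ D i, (∀ l < k i, (u i l).support ⊆ D) → eps N ν k u D i ≤ 3 * (1 / 2 : ℝ) ^ i := by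
  classical
  have hzl := block_lt hz
  have hex : ∀ i M ν, ∃ o : Out, 1 ≤ ν → Good N z i M ν o := by
    intro i M ν
    by_cases h : 1 ≤ ν
    · obtain ⟨o, ho⟩ := exists_out hN hz i M ν h
      exact ⟨o, fun _ => ho⟩
    · exact ⟨⟨0, fun _ => 0, 0, 0, 0, fun _ => 0⟩, fun h' => absurd h' h⟩
  choose G hG using hex
  obtain ⟨st, hst0, hst⟩ : ∃ st : ℕ → ℕ × ℕ, st 0 = (0, 2 ^ 4) ∧
      ∀ i, st (i + 1) = ((G i (st i).1 (st i).2).M', (G i (st i).1 (st i).2).ν') :=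
    ⟨fun n => Nat.rec (0, 2 ^ 4) (fun i s => ((G i s.1 s.2).M', (G i s.1 s.2).ν')) n, rfl,
      fun _ => rfl⟩
  set o : ℕ → Out := fun i => G i (st i).1 (st i).2 with ho
  have hν1 : ∀ i, 2 ≤ (st i).2 := by
    intro i
    induction i with
    | zero => rw [hst0]; norm_num
    | succ i ih =>
      rw [hst]
      exact ih.trans (hG i _ _ (by omega)).hν
  have hgood : ∀ i, Good N z i (st i).1 (st i).2 (o i) := fun i =>
    hG i _ _ (by have := hν1 i; omega)
  have hνs : ∀ i, (st (i + 1)).2 = (o i).ν' := fun i => by rw [hst]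
  have hMs : ∀ i, (st (i + 1)).1 = (o i).M' := fun i => by rw [hst]
  have hMm : Monotone fun i => (st i).1 := by
    apply monotone_nat_of_le_succ
    intro i
    rw [hMs]
    exact (hgood i).ha.trans (hgood i).haM
  have hI : ∀ m n : ℕ, m < n → FLt (Ico (o m).a (o m).M') (Ico (o n).a (o n).M') := by
    intro m n hmn s hs t ht
    rw [Finset.mem_Ico] at hs ht
    have h1 : (st (m + 1)).1 ≤ (st n).1 := hMm hmn
    rw [hMs] at h1
    have := (hgood n).ha
    omega
  set c : ℕ → ℝ := fun j =>
    if h : ∃ n, j ∈ Ico (o n).a (o n).M' then (o h.choose).c j else 0 with hc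
  have hcn : ∀ n, ∀ j ∈ Ico (o n).a (o n).M', c j = (o n).c j := by
    intro n j hj
    have h : ∃ n, j ∈ Ico (o n).a (o n).M' := ⟨n, hj⟩
    have he : h.choose = n := by
      have hs := h.choose_spec
      rcases lt_trichotomy h.choose n with h1 | h1 | h1
      · exact absurd (hI _ _ h1 j hs j hj) (lt_irrefl _)
      · exact h1
      · exact absurd (hI _ _ h1 j hj j hs) (lt_irrefl _)
    simp only [hc]
    rw [dif_pos h, he]
  refine ⟨fun i => (st i).2, fun i => (o i).k, fun i => (o i).u,
    fun i => Ico (o i).a (o i).M', c, ?_, hI, ?_, ?_, ?_⟩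
  · refine ⟨fun i => (hgood i).hk, fun i => (hgood i).u0, fun i => (hgood i).us, ?_,
      fun i => (hgood i).uN, ?_, hν1, ?_⟩
    · intro i i' l l' hii hl hl' s hs t ht
      obtain ⟨j, hj, hs⟩ := (hgood i).sup l hl s hs
      obtain ⟨j', hj', ht⟩ := (hgood i').sup l' hl' t ht
      exact hzl j j' (hI i i' hii j hj j' hj') s hs t ht
    · apply monotone_nat_of_le_succ
      intro i
      rw [hνs]
      exact (hgood i).hν
    · intro i
      cases i with
      | zero =>
        have h := flog_two_pow 4
        simp only [hst0]
        have h2 : (4 : ℝ) ≤ flog ((2 ^ 4 : ℕ)) := by exact_mod_cast h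
        calc (flog ((2 ^ 4 : ℕ)))⁻¹ ≤ (4 : ℝ)⁻¹ := inv_anti₀ (by norm_num) h2
          _ = _ := by norm_num
      | succ i =>
        rw [hνs]
        exact (hgood i).νf
  · intro n
    unfold yy
    rw [(hgood n).eq]
    exact Finset.sum_congr rfl fun j hj => by rw [hcn n j hj]
  · intro n
    exact (hgood n).n1
  · intro D i hD
    have h1 := (hgood i).hee D hD
    have h2 := (hgood i).hl1 D
    unfold eps yy
    simp only
    rw [hνs]
    linarith

end helpers

/-- every block sequence `(z_n)` of `(e_i)` admits a normalized
block sequence `(y_n)` of `(z_n)` which is equivalent to the unit vector basis. -/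
theorem further_block_equivalent_to_basis
    (N : c00 → ℝ) (hN : IsSchlumprechtNorm N)
    (z : ℕ → c00) (hz : IsBlockSeq z) :
    ∃ (I : ℕ → Finset ℕ) (c : ℕ → ℝ) (y : ℕ → c00),
      (∀ m n : ℕ, m < n → FLt (I m) (I n)) ∧
      (∀ n, y n = ∑ i ∈ I n, c i • z i) ∧
      (∀ n, N (y n) = 1) ∧
      ∃ C : ℝ, 1 ≤ C ∧ ∀ a : ℕ →₀ ℝ,
        (1 / C) * N (a.sum fun i t => t • Finsupp.single i (1 : ℝ)) ≤
          N (a.sum fun i t => t • y i) ∧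
        N (a.sum fun i t => t • y i) ≤
          C * N (a.sum fun i t => t • Finsupp.single i (1 : ℝ)) := by
  obtain ⟨ν, k, u, I, c, hS, hI, hy, hy1, hε⟩ := exists_sys hN hz
  refine ⟨I, c, yy k u, hI, hy, hy1, 14, by norm_num, ?_⟩
  intro a
  have hblk : ∀ i i', i < i' → FLt (yy k u i).support (yy k u i').support := by
    intro i i' h s hs t ht
    obtain ⟨l, hl, hs⟩ := yy_ne (Finsupp.mem_support_iff.1 hs)
    obtain ⟨l', hl', ht⟩ := yy_ne (Finsupp.mem_support_iff.1 ht)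
    exact hS.uss i i' l l' h hl hl' s hs t ht
  have hsub : a.support ⊆ Finset.range (a.support.sup (· + 1)) := by
    intro i hi
    rw [Finset.mem_range]
    exact Finset.le_sup (f := (· + 1)) hi
  generalize a.support.sup (· + 1) = M at hsub
  have e1 : (a.sum fun i t => t • Finsupp.single i (1 : ℝ)) = vec (Finset.range M) a := by
    rw [Finsupp.sum_of_support_subset a hsub _ (by simp)]
    unfold vec
    simp
  have e2 : (a.sum fun i t => t • yy k u i) = ∑ i ∈ Finset.range M, a i • yy k u i :=
    Finsupp.sum_of_support_subset a hsub _ (by simp)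
  rw [e1, e2]
  have h1 := lower_est hN hblk hy1 a _ (Finset.range M) le_rfl
  have h2 := upper_est hN hS a M hε
  have h3 := N_nonneg hN (vec (Finset.range M) a)
  exact ⟨by linarith, h2⟩
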